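/- arXiv:2310.00605 — 6 statements merged into one kernel-verified Lean document; each statement's English description precedes it below -/
import Mathlib

section
/- Let ‖·‖ be a norm on the space of real l×m matrices, let M ∈ ℝ^{n×l} be a full-rank matrix with n ≤ l (so that M is surjective), and let C ∈ ℝ^{n×m} be a fixed matrix. Then min over X ∈ ℝ^{l×m} with M·X = C of ‖X‖ equals max over Y ∈ ℝ^{n×m} with ‖Mᵀ·Y‖* ≤ 1 of trace(Cᵀ·Y); both the minimum and the maximum are attained. -/
/-!
Weak duality: if `M * X = C` then `trace (Cᵀ * Y) = trace (Xᵀ * (Mᵀ * Y))`, which is at most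
`N X` as soon as the dual norm of `Mᵀ * Y` is at most `1` (`le_of_sSup_le_one`; the supremum is a
genuine one because linear functionals in finite dimension are bounded, `exists_linear_bound`).

Strong duality (`exists_min_and_functional`): the point of the fibre `{X | M * X = C}` of least norm
exists by closedness of `ker (M * ·)` in finite dimension, and its norm is the quotient norm of its
class modulo that kernel. Hahn–Banach on the quotient gives a functional of norm at most `1`
attaining this norm; since the quotient is the space of all `n × m` matrices, and every functional
there is a trace pairing (`exists_trace_rep`), this functional is an optimal `Y`.
-/

open Matrix

lemma core_of_norm_axioms {E : Type*} [AddCommGroup E] [Module ℝ E] (N : E → ℝ)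
    (h0 : ∀ x, 0 ≤ N x) (ht : ∀ x y, N (x + y) ≤ N x + N y)
    (hh : ∀ (c : ℝ) (x), N (c • x) = |c| * N x) (hd : ∀ x, N x = 0 → x = 0) :
    @NormedSpace.Core ℝ E _ _ _ ⟨N⟩ :=
  let : Norm E := ⟨N⟩
  { norm_nonneg := h0
    norm_smul := hh
    norm_triangle := ht
    norm_eq_zero_iff := fun x => ⟨hd x, fun h => by
      have := hh 0 x
      rw [zero_smul, abs_zero, zero_mul] at this
      rw [h]; exact this⟩ }

lemma exists_linear_bound {E : Type*} [AddCommGroup E] [Module ℝ E] [FiniteDimensional ℝ E]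
    (N : E → ℝ) (h0 : ∀ x, 0 ≤ N x) (ht : ∀ x y, N (x + y) ≤ N x + N y)
    (hh : ∀ (c : ℝ) (x), N (c • x) = |c| * N x) (hd : ∀ x, N x = 0 → x = 0) (f : E →ₗ[ℝ] ℝ) :
    ∃ K : ℝ, ∀ x, N x ≤ 1 → f x ≤ K := by
  let : Norm E := ⟨N⟩
  have core : NormedSpace.Core ℝ E := core_of_norm_axioms N h0 ht hh hd
  let : NormedAddCommGroup E := NormedAddCommGroup.ofCore core
  let : NormedSpace ℝ E := NormedSpace.ofCore core
  refine ⟨‖LinearMap.toContinuousLinearMap f‖, fun x hx => ?_⟩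
  exact (le_abs_self _).trans
    ((LinearMap.toContinuousLinearMap f).unit_le_opNorm x hx)

/-- A functional whose supremum over the unit ball is at most `1` is dominated by the norm. -/
lemma le_of_sSup_le_one {E : Type*} [AddCommGroup E] [Module ℝ E] [FiniteDimensional ℝ E]
    (N : E → ℝ) (h0 : ∀ x, 0 ≤ N x) (ht : ∀ x y, N (x + y) ≤ N x + N y)
    (hh : ∀ (c : ℝ) (x), N (c • x) = |c| * N x) (hd : ∀ x, N x = 0 → x = 0) (f : E →ₗ[ℝ] ℝ)
    (hf : sSup {t : ℝ | ∃ x, N x ≤ 1 ∧ t = f x} ≤ 1) (x : E) : f x ≤ N x := by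
  obtain ⟨K, hK⟩ := exists_linear_bound N h0 ht hh hd f
  have hbdd : BddAbove {t : ℝ | ∃ x, N x ≤ 1 ∧ t = f x} :=
    ⟨K, by rintro _ ⟨x, hx, rfl⟩; exact hK x hx⟩
  rcases (h0 x).eq_or_lt with h | h
  · rw [hd x h.symm, map_zero]; exact h0 0
  · have h1 : N ((N x)⁻¹ • x) ≤ 1 := by
      rw [hh, abs_of_pos (inv_pos.2 h), inv_mul_cancel₀ h.ne']
    have h2 : f ((N x)⁻¹ • x) ≤ 1 := (le_csSup hbdd ⟨_, h1, rfl⟩).trans hf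
    rw [map_smul, smul_eq_mul, inv_mul_le_iff₀ h, mul_one] at h2
    exact h2

/-- Strong duality for a surjection `A` from a finite-dimensional normed space: some point of the
fibre over `c` has its norm attained by a functional on the target that is admissible, i.e. whose
pullback along `A` is dominated by the norm. -/
lemma exists_min_and_functional {E F : Type*} [AddCommGroup E] [Module ℝ E]
    [FiniteDimensional ℝ E] [AddCommGroup F] [Module ℝ F]
    (N : E → ℝ) (h0 : ∀ x, 0 ≤ N x) (ht : ∀ x y, N (x + y) ≤ N x + N y)
    (hh : ∀ (c : ℝ) (x), N (c • x) = |c| * N x) (hd : ∀ x, N x = 0 → x = 0)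
    (A : E →ₗ[ℝ] F) (hA : Function.Surjective A) (c : F) :
    ∃ (x₀ : E) (g : F →ₗ[ℝ] ℝ), A x₀ = c ∧ (∀ x, g (A x) ≤ N x) ∧ g c = N x₀ := by
  let : Norm E := ⟨N⟩
  have core : NormedSpace.Core ℝ E := core_of_norm_axioms N h0 ht hh hd
  let : NormedAddCommGroup E := NormedAddCommGroup.ofCore core
  let : NormedSpace ℝ E := NormedSpace.ofCore core
  have : ProperSpace E := FiniteDimensional.proper ℝ E
  let S : Submodule ℝ E := LinearMap.ker A
  have hS : IsClosed (S : Set E) := S.closed_of_finiteDimensional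
  have : IsClosed (S : Set E) := hS
  obtain ⟨x₁, rfl⟩ := hA c
  obtain ⟨k, hk, hdist⟩ := hS.exists_infDist_eq_dist ⟨0, S.zero_mem⟩ x₁
  obtain ⟨f, hf1, hf⟩ := exists_dual_vector'' ℝ (Submodule.Quotient.mk x₁ : E ⧸ S)
  let e := A.quotKerEquivOfSurjective hA
  have he : ∀ x, e.symm (A x) = Submodule.Quotient.mk x := fun x => by
    rw [LinearEquiv.symm_apply_eq]; rfl
  -- Moving `x₁` by the nearest kernel element `k` realises the quotient norm of its class.
  have hnorm : ‖(Submodule.Quotient.mk x₁ : E ⧸ S)‖ = ‖x₁ - k‖ := by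
    rw [← dist_eq_norm, ← hdist]
    exact QuotientAddGroup.norm_mk x₁
  refine ⟨x₁ - k, f.toLinearMap ∘ₗ e.symm.toLinearMap, ?_, fun x => ?_, ?_⟩
  · rw [map_sub, LinearMap.mem_ker.1 hk, sub_zero]
  · change f (e.symm (A x)) ≤ ‖x‖
    rw [he]
    calc f (Submodule.Quotient.mk x) ≤ ‖f (Submodule.Quotient.mk x)‖ := le_abs_self _
      _ ≤ 1 * ‖(Submodule.Quotient.mk x : E ⧸ S)‖ := f.le_of_opNorm_le hf1 _
      _ ≤ ‖x‖ := by rw [one_mul]; exact Submodule.Quotient.norm_mk_le S x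
  · change f (e.symm (A x₁)) = ‖x₁ - k‖
    rw [he, hf, hnorm]; rfl

/-- Every functional on matrices is a trace pairing: take its values on the matrix units as the
entries of `Y`. -/
lemma exists_trace_rep {n m : ℕ} (g : Matrix (Fin n) (Fin m) ℝ →ₗ[ℝ] ℝ) :
    ∃ Y : Matrix (Fin n) (Fin m) ℝ, ∀ C, g C = (Cᵀ * Y).trace := by
  refine ⟨Matrix.of fun i j => g (Matrix.single i j 1), fun C => ?_⟩
  conv_lhs => rw [Matrix.matrix_eq_sum_single C]
  simp only [map_sum, Matrix.trace, Matrix.diag, Matrix.mul_apply, Matrix.transpose_apply,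
    Matrix.of_apply]
  rw [Finset.sum_comm]
  refine Finset.sum_congr rfl fun j _ => Finset.sum_congr rfl fun i _ => ?_
  rw [← smul_eq_mul, ← map_smul, Matrix.smul_single, smul_eq_mul, mul_one]

/-- **Constrained Matrix Norm Optimization.**
Let `N` be a norm on real `l × m` matrices, let `M ∈ ℝ^{n×l}` be full rank with `n ≤ l`
(equivalently, `M` is surjective as a linear map), and let `C ∈ ℝ^{n×m}` be fixed.  Then
`min { N X : M * X = C }` equals `max { trace (Cᵀ * Y) : N* (Mᵀ * Y) ≤ 1 }`, where `N*` is the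
dual norm of `N`, and both the minimum and the maximum are attained. -/
theorem stmt0 (l m n : ℕ)
    (N : Matrix (Fin l) (Fin m) ℝ → ℝ)
    (hN_nonneg : ∀ X, 0 ≤ N X)
    (hN_triangle : ∀ X Y, N (X + Y) ≤ N X + N Y)
    (hN_homog : ∀ (c : ℝ) (X), N (c • X) = |c| * N X)
    (hN_def : ∀ X, N X = 0 → X = 0)
    (M : Matrix (Fin n) (Fin l) ℝ)
    (hM : Function.Surjective M.mulVecLin)
    (C : Matrix (Fin n) (Fin m) ℝ) :
    ∃ r : ℝ,
      IsLeast {s : ℝ | ∃ X : Matrix (Fin l) (Fin m) ℝ, M * X = C ∧ s = N X} r ∧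
      IsGreatest {s : ℝ | ∃ Y : Matrix (Fin n) (Fin m) ℝ,
        sSup {t : ℝ | ∃ X : Matrix (Fin l) (Fin m) ℝ, N X ≤ 1 ∧ t = (Xᵀ * (Mᵀ * Y)).trace} ≤ 1 ∧
        s = (Cᵀ * Y).trace} r := by
  let A : Matrix (Fin l) (Fin m) ℝ →ₗ[ℝ] Matrix (Fin n) (Fin m) ℝ :=
    { toFun := fun X => M * X
      map_add' := Matrix.mul_add M
      map_smul' := fun c X => Matrix.mul_smul M c X }
  have hA : Function.Surjective A := fun D => by
    obtain ⟨B, hB⟩ := Matrix.mulVec_surjective_iff_exists_right_inverse.1 hM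
    exact ⟨B * D, by change M * (B * D) = D; rw [← Matrix.mul_assoc, hB, Matrix.one_mul]⟩
  obtain ⟨X₀, g, hX₀, hg, hgC⟩ :=
    exists_min_and_functional N hN_nonneg hN_triangle hN_homog hN_def A hA C
  obtain ⟨Y₀, hY₀⟩ := exists_trace_rep g
  have hadj : ∀ (X : Matrix (Fin l) (Fin m) ℝ) (Y : Matrix (Fin n) (Fin m) ℝ),
      (Xᵀ * (Mᵀ * Y)).trace = ((M * X)ᵀ * Y).trace := fun X Y => by
    rw [Matrix.transpose_mul, Matrix.mul_assoc]
  refine ⟨N X₀, ⟨⟨X₀, hX₀, rfl⟩, ?_⟩, ⟨Y₀, ?_, ?_⟩, ?_⟩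
  · rintro _ ⟨X, hX, rfl⟩
    rw [← hgC, ← hX]
    exact hg X
  · refine Real.sSup_le ?_ zero_le_one
    rintro _ ⟨X, hX, rfl⟩
    rw [hadj, ← hY₀]
    exact (hg X).trans hX
  · rw [← hY₀, hgC]
  · rintro _ ⟨Y, hY, rfl⟩
    let f : Matrix (Fin l) (Fin m) ℝ →ₗ[ℝ] ℝ :=
      { toFun := fun X => (Xᵀ * (Mᵀ * Y)).trace
        map_add' := fun X X' => by
          rw [Matrix.transpose_add, Matrix.add_mul, Matrix.trace_add]
        map_smul' := fun c X => by
          rw [Matrix.transpose_smul, Matrix.smul_mul, Matrix.trace_smul, RingHom.id_apply] }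
    have h := le_of_sSup_le_one N hN_nonneg hN_triangle hN_homog hN_def f hY X₀
    have hX₀' : M * X₀ = C := hX₀
    rw [← hX₀', ← hadj]
    exact h
end

section
/- Let A ∈ ℝ^{m×n}, let B ∈ ℝ^{l×n} be injective (i.e., full rank with n ≤ l), let ‖·‖_V be a norm on ℝ^m, ‖·‖_W a norm on ℝ^l, and c ∈ ℝ^n a fixed vector. Then max over x ∈ ℝ^n with ‖Bx‖_W ≤ 1 of (‖Ax‖_V + cᵀx) equals max over α ∈ ℝ^m with ‖α‖_V* ≤ 1 of the minimum over β ∈ ℝ^l with Bᵀβ = Aᵀα + c of ‖β‖_W*. In particular, for c = 0, max over x with ‖Bx‖_W ≤ 1 of ‖Ax‖_V equals max over α with ‖α‖_V* ≤ 1 of min over β with Bᵀβ = Aᵀα of ‖β‖_W*. -/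
/-!
For a norm `N` on `ℝ^k`, Hahn-Banach gives `N v = max {α ⬝ᵥ v : N* α ≤ 1}`, so the left-hand side
is the supremum of `(Aᵀ α + c) ⬝ᵥ x` over all pairs `(x, α)` with `NW (B x) ≤ 1` and `NV* α ≤ 1`.
Taking the supremum over `x` first, it remains to see that for every `d`
`sup {d ⬝ᵥ x : NW (B x) ≤ 1} = min {NW* β : Bᵀ β = d}` (`isLeast_dual`).
Here `≤` is the inequality `y ⬝ᵥ β ≤ N* β * N y`. For `≥`, with `S` the left-hand side, the
functional `B x ↦ d ⬝ᵥ x` on the range of `B` (well defined as `B` is injective) is dominated by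
`S * NW`; a Hahn-Banach extension to `ℝ^l` is represented by some `β` with `Bᵀ β = d` and
`NW* β ≤ S` (`exists_dual_preimage`).

All suprema are finite because any seminorm on `ℝ^k` is bounded by a multiple of any norm
(`IsNorm.exists_le_mul`); thus the two suprema agree once the two sets have the same upper bounds.
-/

open Matrix

/-- The dual norm of a norm `N` on `ℝ^k`, with respect to the Euclidean inner product. -/
noncomputable def dualNorm {k : ℕ} (N : (Fin k → ℝ) → ℝ) (y : Fin k → ℝ) : ℝ :=
  sSup {r : ℝ | ∃ x : Fin k → ℝ, N x ≤ 1 ∧ r = x ⬝ᵥ y}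

/-- `N` is a norm on the real vector space `ℝ^k`. -/
structure IsNorm {k : ℕ} (N : (Fin k → ℝ) → ℝ) : Prop where
  nonneg : ∀ x, 0 ≤ N x
  triangle : ∀ x y, N (x + y) ≤ N x + N y
  homog : ∀ (a : ℝ) (x), N (a • x) = |a| * N x
  eq_zero : ∀ x, N x = 0 → x = 0

namespace IsNorm

variable {k : ℕ} {N : (Fin k → ℝ) → ℝ}

lemma map_zero (h : IsNorm N) : N 0 = 0 := by
  simpa using h.homog 0 0

/-- A linear functional is bounded with respect to any norm on `ℝ^k`, being continuous for the
topology defined by that norm. -/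
lemma exists_bound (h : IsNorm N) (f : (Fin k → ℝ) →ₗ[ℝ] ℝ) : ∃ C, ∀ x, |f x| ≤ C * N x := by
  -- Stated for an abstract space, which carries no norm yet, so that `N` can be made its norm.
  have key : ∀ (E : Type) [AddCommGroup E] [Module ℝ E] [FiniteDimensional ℝ E] (M : E → ℝ)
      (_ : ∀ x, 0 ≤ M x) (_ : ∀ x y, M (x + y) ≤ M x + M y)
      (_ : ∀ (a : ℝ) (x), M (a • x) = |a| * M x) (_ : ∀ x, M x = 0 → x = 0)
      (g : E →ₗ[ℝ] ℝ), ∃ C, ∀ x, |g x| ≤ C * M x := by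
    intro E _ _ _ M h1 h2 h3 h4 g
    let _ : Norm E := ⟨M⟩
    have core : NormedSpace.Core ℝ E :=
      { norm_nonneg := h1
        norm_smul := h3
        norm_triangle := h2
        norm_eq_zero_iff := fun x => ⟨h4 x, fun hx => by
          subst hx
          change M 0 = 0
          simpa using h3 0 0⟩ }
    let _ : NormedAddCommGroup E := NormedAddCommGroup.ofCore core
    let _ : NormedSpace ℝ E := NormedSpace.ofCore core
    exact ⟨‖LinearMap.toContinuousLinearMap g‖,
      fun x => (LinearMap.toContinuousLinearMap g).le_opNorm x⟩
  exact key (Fin k → ℝ) N h.nonneg h.triangle h.homog h.eq_zero f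

/-- Every seminorm `P` on `ℝ^k` is bounded by a multiple of the norm `N`: expand in the standard
basis and bound each coordinate functional. -/
lemma exists_le_mul (h : IsNorm N) {P : (Fin k → ℝ) → ℝ} (hP : ∀ x, 0 ≤ P x)
    (hadd : ∀ x y, P (x + y) ≤ P x + P y) (hsmul : ∀ (a : ℝ) (x), P (a • x) = |a| * P x) :
    ∃ C, ∀ x, P x ≤ C * N x := by
  choose C hC using fun i => h.exists_bound (LinearMap.proj i)
  refine ⟨∑ i, C i * P (Pi.single i 1), fun x => ?_⟩
  have h0 : P 0 ≤ 0 := by simpa using (hsmul 0 0).le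
  calc P x = P (∑ i, x i • Pi.single i (1 : ℝ)) := by
        rw [← pi_eq_sum_univ' x]
    _ ≤ ∑ i, P (x i • Pi.single i (1 : ℝ)) :=
        Finset.le_sum_of_subadditive P h0 hadd _ _
    _ ≤ ∑ i, C i * P (Pi.single i 1) * N x := by
        refine Finset.sum_le_sum fun i _ => ?_
        rw [hsmul, mul_right_comm]
        exact mul_le_mul_of_nonneg_right (hC i x) (hP _)
    _ = _ := by rw [Finset.sum_mul]

/-- The pullback of a norm along an injective matrix is a norm. -/
lemma comp_mulVec (h : IsNorm N) {n : ℕ} {B : Matrix (Fin k) (Fin n) ℝ}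
    (hB : Function.Injective B.mulVec) : IsNorm fun x => N (B *ᵥ x) where
  nonneg x := h.nonneg _
  triangle x y := by rw [mulVec_add]; exact h.triangle _ _
  homog a x := by rw [mulVec_smul]; exact h.homog _ _
  eq_zero x hx := hB (by rw [h.eq_zero _ hx, mulVec_zero])

lemma bddAbove_dotProduct (h : IsNorm N) (y : Fin k → ℝ) :
    BddAbove {r : ℝ | ∃ x, N x ≤ 1 ∧ r = x ⬝ᵥ y} := by
  obtain ⟨C, hC⟩ := h.exists_bound (dotProductBilin ℝ ℝ y)
  refine ⟨|C|, ?_⟩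
  rintro _ ⟨x, hx, rfl⟩
  have h1 : |x ⬝ᵥ y| ≤ C * N x := by
    rw [dotProduct_comm]; exact hC x
  calc x ⬝ᵥ y ≤ C * N x := (le_abs_self _).trans h1
    _ ≤ |C| * N x := mul_le_mul_of_nonneg_right (le_abs_self C) (h.nonneg x)
    _ ≤ |C| := mul_le_of_le_one_right (abs_nonneg C) hx

/-- A linear functional bounded by `S` on the unit ball is dominated by `S * N`. -/
lemma le_mul_of_ball (h : IsNorm N) {d : Fin k → ℝ} {S : ℝ}
    (hS : ∀ x, N x ≤ 1 → d ⬝ᵥ x ≤ S) (x : Fin k → ℝ) : d ⬝ᵥ x ≤ S * N x := by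
  rcases (h.nonneg x).eq_or_lt with h0 | h0
  · rw [h.eq_zero x h0.symm, h.map_zero]; simp
  · have h1 := hS ((N x)⁻¹ • x) (by rw [h.homog, abs_of_pos (inv_pos.2 h0), inv_mul_cancel₀ h0.ne'])
    rw [dotProduct_smul, smul_eq_mul, inv_mul_le_iff₀ h0] at h1
    linarith

/-- The defining inequality of the dual norm. -/
lemma dotProduct_le (h : IsNorm N) (x y : Fin k → ℝ) : y ⬝ᵥ x ≤ dualNorm N y * N x :=
  h.le_mul_of_ball (fun x hx =>
    le_csSup (h.bddAbove_dotProduct y) ⟨x, hx, dotProduct_comm _ _⟩) x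

lemma dualNorm_le (h : IsNorm N) {y : Fin k → ℝ} {S : ℝ} (hS : ∀ x, N x ≤ 1 → y ⬝ᵥ x ≤ S) :
    dualNorm N y ≤ S := by
  refine csSup_le ⟨_, 0, by simp [h.map_zero], rfl⟩ ?_
  rintro _ ⟨x, hx, rfl⟩
  rw [dotProduct_comm]; exact hS x hx

/-- The Hahn-Banach step: a functional `d` on `ℝ^n`, transported to the range of `B`, extends to
`ℝ^k` with the same bound with respect to `N`. -/
lemma exists_dual_preimage (h : IsNorm N) {n : ℕ} {B : Matrix (Fin k) (Fin n) ℝ}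
    (hB : Function.Injective B.mulVec) {d : Fin n → ℝ} {S : ℝ} (hS0 : 0 ≤ S)
    (hS : ∀ x, d ⬝ᵥ x ≤ S * N (B *ᵥ x)) :
    ∃ β, Bᵀ *ᵥ β = d ∧ dualNorm N β ≤ S := by
  let e := LinearEquiv.ofInjective B.mulVecLin hB
  let f : (Fin k → ℝ) →ₗ.[ℝ] ℝ :=
    ⟨LinearMap.range B.mulVecLin, (dotProductBilin ℝ ℝ d) ∘ₗ e.symm.toLinearMap⟩
  have hf : ∀ x, f (e x) = d ⬝ᵥ x := fun x => by
    change d ⬝ᵥ (e.symm (e x)) = _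
    rw [e.symm_apply_apply]
  obtain ⟨g, hg1, hg2⟩ := exists_extension_of_le_sublinear f (fun y => S * N y)
    (fun a ha x => by simp only [h.homog, abs_of_pos ha]; ring)
    (fun x y => by
      have := mul_le_mul_of_nonneg_left (h.triangle x y) hS0
      simpa only [mul_add] using this)
    (fun y => by
      obtain ⟨x, rfl⟩ := e.surjective y
      rw [hf]; exact hS x)
  have hgB : ∀ x, g (B *ᵥ x) = d ⬝ᵥ x := fun x => by
    rw [← hf x, ← hg1]; rfl
  have hβ : ∀ y, (fun i => g (Pi.single i 1)) ⬝ᵥ y = g y := fun y => by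
    conv_rhs => rw [pi_eq_sum_univ' y, map_sum]
    simp [dotProduct, mul_comm]
  refine ⟨fun i => g (Pi.single i 1), ?_, h.dualNorm_le fun y hy => ?_⟩
  · refine dotProduct_eq _ _ fun x => ?_
    rw [mulVec_transpose, ← dotProduct_mulVec, hβ, hgB]
  · rw [hβ]
    exact (hg2 y).trans (mul_le_of_le_one_right hS0 hy)

/-- Every vector has a norming functional in the dual unit ball. -/
lemma exists_norming (h : IsNorm N) (v : Fin k → ℝ) :
    ∃ α, dualNorm N α ≤ 1 ∧ α ⬝ᵥ v = N v := by
  by_cases hv : v = 0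
  · exact ⟨0, h.dualNorm_le (by simp), by simp [hv, h.map_zero]⟩
  -- Apply the Hahn-Banach step to the one-column matrix with column `v`.
  let B : Matrix (Fin k) (Fin 1) ℝ := fun i _ => v i
  have hBx : ∀ x, B *ᵥ x = x 0 • v := fun x => by
    ext i; simp [B, mulVec, dotProduct, mul_comm]
  have hB : Function.Injective B.mulVec := fun x y hxy => by
    simp only [hBx] at hxy
    ext i
    rw [Subsingleton.elim i 0]
    exact smul_left_injective ℝ hv hxy
  obtain ⟨β, hβ, hβ1⟩ := h.exists_dual_preimage hB (d := fun _ => N v) zero_le_one (fun x => by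
    simp only [hBx, h.homog, dotProduct, Fin.sum_univ_one, one_mul]
    rw [mul_comm]
    exact mul_le_mul_of_nonneg_right (le_abs_self _) (h.nonneg v))
  refine ⟨β, hβ1, ?_⟩
  have := congrFun hβ 0
  rw [dotProduct_comm]
  exact this

/-- Duality for the inner problem: the minimum of the dual norm over the fibre `Bᵀ β = d` is
attained and equals the supremum of `d` over `{x | N (B x) ≤ 1}`. -/
lemma isLeast_dual (h : IsNorm N) {n : ℕ} {B : Matrix (Fin k) (Fin n) ℝ}
    (hB : Function.Injective B.mulVec) (d : Fin n → ℝ) :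
    IsLeast {s : ℝ | ∃ β, Bᵀ *ᵥ β = d ∧ s = dualNorm N β}
      (dualNorm (fun x => N (B *ᵥ x)) d) := by
  have hN := h.comp_mulVec hB
  have lower : dualNorm (fun x => N (B *ᵥ x)) d ∈
      lowerBounds {s : ℝ | ∃ β, Bᵀ *ᵥ β = d ∧ s = dualNorm N β} := by
    rintro _ ⟨β, rfl, rfl⟩
    refine hN.dualNorm_le fun x hx => ?_
    rw [mulVec_transpose, ← dotProduct_mulVec]
    refine le_csSup (h.bddAbove_dotProduct β) ⟨_, hx, dotProduct_comm _ _⟩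
  have h0 : 0 ≤ dualNorm (fun x => N (B *ᵥ x)) d :=
    le_csSup (hN.bddAbove_dotProduct d) ⟨0, by simp [h.map_zero], by simp⟩
  obtain ⟨β, hβ, hβ1⟩ := h.exists_dual_preimage hB h0 (fun x => hN.dotProduct_le x d)
  exact ⟨⟨β, hβ, (lower ⟨β, hβ, rfl⟩).antisymm hβ1⟩, lower⟩

end IsNorm

lemma max_eq_max_min {m n l : ℕ} (A : Matrix (Fin m) (Fin n) ℝ) (B : Matrix (Fin l) (Fin n) ℝ)
    (hB : Function.Injective B.mulVec) {NV : (Fin m → ℝ) → ℝ} (hV : IsNorm NV)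
    {NW : (Fin l → ℝ) → ℝ} (hW : IsNorm NW) (c : Fin n → ℝ) :
    sSup {r : ℝ | ∃ x : Fin n → ℝ, NW (B.mulVec x) ≤ 1 ∧ r = NV (A.mulVec x) + c ⬝ᵥ x} =
      sSup {r : ℝ | ∃ α : Fin m → ℝ, dualNorm NV α ≤ 1 ∧
        r = sInf {s : ℝ | ∃ β : Fin l → ℝ,
          Bᵀ.mulVec β = Aᵀ.mulVec α + c ∧ s = dualNorm NW β}} := by
  have hN := hW.comp_mulVec hB
  simp only [fun d => (hW.isLeast_dual hB d).csInf_eq]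
  have hdot : ∀ (α : Fin m → ℝ) (x : Fin n → ℝ),
      (Aᵀ *ᵥ α + c) ⬝ᵥ x = α ⬝ᵥ (A *ᵥ x) + c ⬝ᵥ x := fun α x => by
    rw [add_dotProduct, mulVec_transpose, ← dotProduct_mulVec]
  let L : Set ℝ := {r : ℝ | ∃ x : Fin n → ℝ, NW (B.mulVec x) ≤ 1 ∧
    r = NV (A.mulVec x) + c ⬝ᵥ x}
  have hLne : L.Nonempty := ⟨_, 0, by simp [hW.map_zero], rfl⟩
  have hLbdd : BddAbove L := by
    obtain ⟨C, hC⟩ := hN.exists_le_mul (P := fun x => NV (A *ᵥ x)) (fun x => hV.nonneg _)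
      (fun x y => by simp only [mulVec_add]; exact hV.triangle _ _)
      (fun a x => by simp only [mulVec_smul]; exact hV.homog _ _)
    refine ⟨|C| + dualNorm (fun x => NW (B *ᵥ x)) c, ?_⟩
    rintro _ ⟨x, hx, rfl⟩
    refine add_le_add ?_ (le_csSup (hN.bddAbove_dotProduct c) ⟨x, hx, dotProduct_comm _ _⟩)
    calc NV (A *ᵥ x) ≤ C * NW (B *ᵥ x) := hC x
      _ ≤ |C| * NW (B *ᵥ x) := mul_le_mul_of_nonneg_right (le_abs_self C) (hW.nonneg _)
      _ ≤ |C| := mul_le_of_le_one_right (abs_nonneg C) hx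
  refine (IsLUB.csSup_eq ?_ ?_).symm
  swap
  · exact ⟨_, 0, hV.dualNorm_le (by simp), rfl⟩
  have hlub := isLUB_csSup hLne hLbdd
  rw [IsLUB] at hlub ⊢
  convert hlub using 1
  -- Both sets have as upper bounds exactly the bounds of `α ⬝ᵥ A x + c ⬝ᵥ x` over all pairs.
  ext U
  constructor
  · rintro hU _ ⟨x, hx, rfl⟩
    obtain ⟨α, hα, hαx⟩ := hV.exists_norming (A *ᵥ x)
    rw [← hαx, ← hdot]
    exact (le_csSup (hN.bddAbove_dotProduct _) ⟨x, hx, dotProduct_comm _ _⟩).trans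
      (hU ⟨α, hα, rfl⟩)
  · rintro hU _ ⟨α, hα, rfl⟩
    refine hN.dualNorm_le fun x hx => ?_
    rw [hdot]
    refine le_trans (add_le_add_left ?_ _) (hU ⟨x, hx, rfl⟩)
    exact (hV.dotProduct_le _ α).trans (mul_le_of_le_one_left (hV.nonneg _) hα)

/-- Let `A ∈ ℝ^{m×n}`, `B ∈ ℝ^{l×n}` injective, `NV` a norm on `ℝ^m`, `NW` a norm on `ℝ^l`,
and `c ∈ ℝ^n`.  Then `max { NV (A x) + cᵀ x : NW (B x) ≤ 1 }` equals
`max { min { NW* β : Bᵀ β = Aᵀ α + c } : NV* α ≤ 1 }`; in particular, for `c = 0`,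
`max { NV (A x) : NW (B x) ≤ 1 } = max { min { NW* β : Bᵀ β = Aᵀ α } : NV* α ≤ 1 }`. -/
theorem stmt1 (m n l : ℕ)
    (A : Matrix (Fin m) (Fin n) ℝ) (B : Matrix (Fin l) (Fin n) ℝ)
    (hB : Function.Injective B.mulVec)
    (NV : (Fin m → ℝ) → ℝ)
    (hNV_nonneg : ∀ x, 0 ≤ NV x)
    (hNV_triangle : ∀ x y, NV (x + y) ≤ NV x + NV y)
    (hNV_homog : ∀ (a : ℝ) (x), NV (a • x) = |a| * NV x)
    (hNV_def : ∀ x, NV x = 0 → x = 0)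
    (NW : (Fin l → ℝ) → ℝ)
    (hNW_nonneg : ∀ x, 0 ≤ NW x)
    (hNW_triangle : ∀ x y, NW (x + y) ≤ NW x + NW y)
    (hNW_homog : ∀ (a : ℝ) (x), NW (a • x) = |a| * NW x)
    (hNW_def : ∀ x, NW x = 0 → x = 0)
    (c : Fin n → ℝ) :
    (sSup {r : ℝ | ∃ x : Fin n → ℝ, NW (B.mulVec x) ≤ 1 ∧ r = NV (A.mulVec x) + c ⬝ᵥ x} =
      sSup {r : ℝ | ∃ α : Fin m → ℝ, dualNorm NV α ≤ 1 ∧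
        r = sInf {s : ℝ | ∃ β : Fin l → ℝ, Bᵀ.mulVec β = Aᵀ.mulVec α + c ∧ s = dualNorm NW β}}) ∧
    (sSup {r : ℝ | ∃ x : Fin n → ℝ, NW (B.mulVec x) ≤ 1 ∧ r = NV (A.mulVec x)} =
      sSup {r : ℝ | ∃ α : Fin m → ℝ, dualNorm NV α ≤ 1 ∧
        r = sInf {s : ℝ | ∃ β : Fin l → ℝ, Bᵀ.mulVec β = Aᵀ.mulVec α ∧ s = dualNorm NW β}}) := by
  have hV : IsNorm NV := ⟨hNV_nonneg, hNV_triangle, hNV_homog, hNV_def⟩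
  have hW : IsNorm NW := ⟨hNW_nonneg, hNW_triangle, hNW_homog, hNW_def⟩
  refine ⟨max_eq_max_min A B hB hV hW c, ?_⟩
  simpa only [zero_dotProduct, add_zero] using max_eq_max_min A B hB hV hW 0
end

section
/- For any X ∈ ℝ^{n×m} and any p, q ∈ [1,∞], the dual of the L_{p,q}-norm evaluated at X equals the L_{p*,q*}-norm of X, and the dual of the transposed L_{p,q}-norm evaluated at X equals the transposed L_{p*,q*}-norm of X, where p* and q* are the Hölder conjugates of p and q (1/p + 1/p* = 1, 1/q + 1/q* = 1). -/
/-!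
The proof reduces to vectors. For conjugate exponents `p`, `p*` two facts hold on `ℝ^k`:
Hölder's inequality `∑ yᵢ xᵢ ≤ ‖y‖_p ‖x‖_{p*}` (`sum_mul_le_pNorm`), and its sharpness, namely
some `y` with `‖y‖_p ≤ 1` gives `∑ yᵢ xᵢ = ‖x‖_{p*}` (`exists_sum_mul_eq_pNorm`).

Since `trace (Yᵀ X) = ∑ⱼ ∑ᵢ Yᵢⱼ Xᵢⱼ`, Hölder on each column and then on the vectors of column norms
bounds the trace by `‖Y‖_{L_{p,q}} ‖X‖_{L_{p*,q*}}`. Equality is reached by `Yᵢⱼ = wⱼ yᵢⱼ`, where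
column `j` of `y` is extremal for column `j` of `X`, and `w` is extremal for the vector of column
norms of `X`; homogeneity and monotonicity of the vector norm give `‖Y‖_{L_{p,q}} ≤ ‖w‖_q ≤ 1`.
The transposed statement follows from `trace (Yᵀ X) = trace (Y Xᵀ)`.
-/

open Matrix
open scoped ENNReal

/-- The vector `p`-norm on `ℝ^k`, for `p ∈ [1,∞]` (given as an element of `ℝ≥0∞`). -/
noncomputable def pNorm {k : ℕ} (p : ℝ≥0∞) (x : Fin k → ℝ) : ℝ :=
  if p = ∞ then ⨆ i, |x i| else (∑ i, |x i| ^ p.toReal) ^ (1 / p.toReal)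

/-- The `L_{p,q}`-norm of a matrix: the `q`-norm of the vector of `p`-norms of its columns. -/
noncomputable def Lpq {a b : ℕ} (p q : ℝ≥0∞) (M : Matrix (Fin a) (Fin b) ℝ) : ℝ :=
  pNorm q (fun j : Fin b => pNorm p (fun i : Fin a => M i j))

lemma pNorm_top {k : ℕ} (x : Fin k → ℝ) : pNorm ∞ x = ⨆ i, |x i| := if_pos rfl

lemma pNorm_of_ne_top {k : ℕ} {p : ℝ≥0∞} (hp : p ≠ ∞) (x : Fin k → ℝ) :
    pNorm p x = (∑ i, |x i| ^ p.toReal) ^ (1 / p.toReal) := if_neg hp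

lemma pNorm_one {k : ℕ} (x : Fin k → ℝ) : pNorm 1 x = ∑ i, |x i| := by
  simp [pNorm_of_ne_top ENNReal.one_ne_top]

lemma pNorm_nonneg {k : ℕ} (p : ℝ≥0∞) (x : Fin k → ℝ) : 0 ≤ pNorm p x := by
  unfold pNorm
  split_ifs
  · exact Real.iSup_nonneg fun i => abs_nonneg _
  · positivity

lemma abs_le_pNorm_top {k : ℕ} (x : Fin k → ℝ) (i : Fin k) : |x i| ≤ pNorm ∞ x := by
  rw [pNorm_top]
  exact le_ciSup (f := fun i => |x i|) (Set.finite_range _).bddAbove i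

lemma pNorm_mono {k : ℕ} (p : ℝ≥0∞) {x y : Fin k → ℝ} (h : ∀ i, |x i| ≤ |y i|) :
    pNorm p x ≤ pNorm p y := by
  by_cases hp : p = ∞
  · subst hp
    rw [pNorm_top x]
    exact Real.iSup_le (fun i => (h i).trans (abs_le_pNorm_top y i)) (pNorm_nonneg _ _)
  · rw [pNorm_of_ne_top hp, pNorm_of_ne_top hp]
    refine Real.rpow_le_rpow (by positivity) ?_ (by positivity)
    exact Finset.sum_le_sum fun i _ => Real.rpow_le_rpow (abs_nonneg _) (h i) (by positivity)

lemma pNorm_smul {k : ℕ} {p : ℝ≥0∞} (hp : 1 ≤ p) (c : ℝ) (x : Fin k → ℝ) :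
    pNorm p (fun i => c * x i) = |c| * pNorm p x := by
  by_cases hpt : p = ∞
  · subst hpt
    simp only [pNorm_top, abs_mul]
    exact (Real.mul_iSup_of_nonneg (abs_nonneg c) _).symm
  · have h0 : p.toReal ≠ 0 :=
      (ENNReal.toReal_pos (zero_lt_one.trans_le hp).ne' hpt).ne'
    simp only [pNorm_of_ne_top hpt, abs_mul, Real.mul_rpow (abs_nonneg _) (abs_nonneg _)]
    rw [← Finset.mul_sum, Real.mul_rpow (by positivity) (by positivity),
      ← Real.rpow_mul (abs_nonneg c), mul_one_div_cancel h0, Real.rpow_one]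

lemma conj_cases {p p' : ℝ≥0∞} (h : 1 / p + 1 / p' = 1) :
    (p = ∞ ∧ p' = 1) ∨ (p = 1 ∧ p' = ∞) ∨
      (p ≠ ∞ ∧ p' ≠ ∞ ∧ p.toReal.HolderConjugate p'.toReal) := by
  simp only [one_div] at h
  by_cases hp : p = ∞
  · left; simpa [hp] using h
  by_cases hp' : p' = ∞
  · right; left; simpa [hp'] using h
  refine Or.inr (Or.inr ⟨hp, hp', ?_⟩)
  have h0 : p ≠ 0 := by rintro rfl; simp at h
  have h0' : p' ≠ 0 := by rintro rfl; simp at h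
  have hr := congrArg ENNReal.toReal h
  rw [ENNReal.toReal_add (by simpa) (by simpa)] at hr
  simp only [ENNReal.toReal_inv, ENNReal.toReal_one] at hr
  have a := ENNReal.toReal_pos h0 hp
  have b := ENNReal.toReal_pos h0' hp'
  exact ⟨by simpa using hr, a, b⟩

/-- Hölder's inequality for `pNorm`, including the exponents `1` and `∞`. -/
lemma sum_mul_le_pNorm {k : ℕ} {p p' : ℝ≥0∞} (h : 1 / p + 1 / p' = 1) (y x : Fin k → ℝ) :
    ∑ i, y i * x i ≤ pNorm p y * pNorm p' x := by
  rcases conj_cases h with ⟨rfl, rfl⟩ | ⟨rfl, rfl⟩ | ⟨hp, hp', hc⟩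
  · rw [pNorm_one, Finset.mul_sum]
    refine Finset.sum_le_sum fun i _ => (le_abs_self _).trans ?_
    rw [abs_mul]
    exact mul_le_mul_of_nonneg_right (abs_le_pNorm_top y i) (abs_nonneg _)
  · rw [pNorm_one, Finset.sum_mul]
    refine Finset.sum_le_sum fun i _ => (le_abs_self _).trans ?_
    rw [abs_mul]
    exact mul_le_mul_of_nonneg_left (abs_le_pNorm_top x i) (abs_nonneg _)
  · rw [pNorm_of_ne_top hp, pNorm_of_ne_top hp']
    exact Real.inner_le_Lp_mul_Lq _ _ _ hc

lemma abs_sign_le_one (a : ℝ) : |(SignType.sign a : ℝ)| ≤ 1 := by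
  rcases lt_trichotomy a 0 with h | h | h <;> simp [h]

/-- Hölder's inequality is sharp: the supremum defining the dual vector norm is attained. -/
lemma exists_sum_mul_eq_pNorm {k : ℕ} {p p' : ℝ≥0∞} (h : 1 / p + 1 / p' = 1) (x : Fin k → ℝ) :
    ∃ y : Fin k → ℝ, pNorm p y ≤ 1 ∧ ∑ i, y i * x i = pNorm p' x := by
  rcases conj_cases h with ⟨rfl, rfl⟩ | ⟨rfl, rfl⟩ | ⟨hp, hp', hc⟩
  · refine ⟨fun i => SignType.sign (x i), ?_, ?_⟩
    · rw [pNorm_top]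
      exact Real.iSup_le (fun i => abs_sign_le_one _) zero_le_one
    · simp only [pNorm_one, sign_mul_self]
  · rcases isEmpty_or_nonempty (Fin k) with he | he
    · exact ⟨0, by simp [pNorm_one], by simp [pNorm_top]⟩
    · -- The mass is concentrated at an index where `|x i|` is maximal.
      obtain ⟨i₀, hi₀⟩ := exists_eq_ciSup_of_finite (f := fun i => |x i|)
      refine ⟨Pi.single i₀ (SignType.sign (x i₀) : ℝ), ?_, ?_⟩
      · rw [pNorm_one, Finset.sum_eq_single i₀ (by intro b _ hb; simp [hb]) (by simp)]
        simpa using abs_sign_le_one (x i₀)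
      · rw [pNorm_top, ← hi₀, Finset.sum_eq_single i₀ (by intro b _ hb; simp [hb]) (by simp)]
        simp
  · obtain ⟨⟨g, hg, hgx⟩, -⟩ := NNReal.isGreatest_Lp (s := Finset.univ)
      (fun i => ‖x i‖₊) hc.symm
    refine ⟨fun i => SignType.sign (x i) * g i, ?_, ?_⟩
    · rw [pNorm_of_ne_top hp]
      have hg' : ∑ i, (g i : ℝ) ^ p.toReal ≤ 1 := by exact_mod_cast hg
      refine Real.rpow_le_one (by positivity) (le_trans ?_ hg') (by positivity)
      refine Finset.sum_le_sum fun i _ => Real.rpow_le_rpow (abs_nonneg _) ?_ (by positivity)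
      rw [abs_mul, NNReal.abs_eq]
      exact mul_le_of_le_one_left (g i).2 (abs_sign_le_one _)
    · rw [pNorm_of_ne_top hp']
      have := congrArg NNReal.toReal hgx
      push_cast at this
      simp only [Real.norm_eq_abs] at this
      rw [← this]
      refine Finset.sum_congr rfl fun i _ => ?_
      rw [mul_right_comm, sign_mul_self]

lemma trace_transpose_mul_eq {n m : ℕ} (Y X : Matrix (Fin n) (Fin m) ℝ) :
    (Yᵀ * X).trace = ∑ j, ∑ i, Y i j * X i j := by
  simp [Matrix.trace, Matrix.mul_apply]

/-- The dual norm of `L_{p,q}` is `L_{p*,q*}`, and the supremum is a maximum. -/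
lemma isGreatest_Lpq {n m : ℕ} {p q p' q' : ℝ≥0∞} (hp : 1 ≤ p)
    (hpc : 1 / p + 1 / p' = 1) (hqc : 1 / q + 1 / q' = 1) (X : Matrix (Fin n) (Fin m) ℝ) :
    IsGreatest {r : ℝ | ∃ Y : Matrix (Fin n) (Fin m) ℝ, Lpq p q Y ≤ 1 ∧ r = (Yᵀ * X).trace}
      (Lpq p' q' X) := by
  constructor
  · choose y hy hyx using fun j => exists_sum_mul_eq_pNorm hpc (fun i => X i j)
    obtain ⟨w, hw, hwx⟩ := exists_sum_mul_eq_pNorm hqc (fun j => pNorm p' (fun i => X i j))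
    refine ⟨Matrix.of fun i j => w j * y j i, le_trans (pNorm_mono q fun j => ?_) hw, ?_⟩
    · simp only [Matrix.of_apply]
      rw [abs_of_nonneg (pNorm_nonneg _ _), pNorm_smul hp]
      exact mul_le_of_le_one_right (abs_nonneg _) (hy j)
    · rw [trace_transpose_mul_eq, Lpq, ← hwx]
      simp only [Matrix.of_apply, mul_assoc, ← Finset.mul_sum, hyx]
  · rintro r ⟨Y, hY, rfl⟩
    rw [trace_transpose_mul_eq]
    calc ∑ j, ∑ i, Y i j * X i j
        ≤ ∑ j, pNorm p (fun i => Y i j) * pNorm p' (fun i => X i j) :=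
          Finset.sum_le_sum fun j _ => sum_mul_le_pNorm hpc _ _
      _ ≤ Lpq p q Y * Lpq p' q' X := sum_mul_le_pNorm hqc _ _
      _ ≤ Lpq p' q' X := mul_le_of_le_one_left (pNorm_nonneg _ _) hY

/-- **Dual of the `L_{p,q}`-norms.**  For any `X ∈ ℝ^{n×m}` and `p, q ∈ [1,∞]` with Hölder
conjugates `p*`, `q*`, the dual norm of `‖·‖_{L_{p,q}}` at `X` is `‖X‖_{L_{p*,q*}}`, and the
dual norm of the transposed norm `‖·‖_{L^⊤_{p,q}}` at `X` is `‖X‖_{L^⊤_{p*,q*}}`. -/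
theorem stmt2 (n m : ℕ) (p q pstar qstar : ℝ≥0∞)
    (hp : 1 ≤ p) (hq : 1 ≤ q)
    (hpconj : 1 / p + 1 / pstar = 1) (hqconj : 1 / q + 1 / qstar = 1)
    (X : Matrix (Fin n) (Fin m) ℝ) :
    (sSup {r : ℝ | ∃ Y : Matrix (Fin n) (Fin m) ℝ, Lpq p q Y ≤ 1 ∧ r = (Yᵀ * X).trace} =
      Lpq pstar qstar X) ∧
    (sSup {r : ℝ | ∃ Y : Matrix (Fin n) (Fin m) ℝ, Lpq p q Yᵀ ≤ 1 ∧ r = (Yᵀ * X).trace} =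
      Lpq pstar qstar Xᵀ) := by
  refine ⟨(isGreatest_Lpq hp hpconj hqconj X).csSup_eq, ?_⟩
  rw [← (isGreatest_Lpq hp hpconj hqconj Xᵀ).csSup_eq]
  congr 1
  ext r
  have key (Y : Matrix (Fin n) (Fin m) ℝ) : (Yᵀᵀ * Xᵀ).trace = (Yᵀ * X).trace := by
    rw [← Matrix.trace_transpose (Yᵀ * X), Matrix.transpose_mul, Matrix.trace_mul_comm]
  constructor
  · rintro ⟨Y, hY, rfl⟩
    exact ⟨Yᵀ, hY, (key Y).symm⟩
  · rintro ⟨Y, hY, rfl⟩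
    exact ⟨Yᵀ, hY, key Yᵀ⟩
end

section
/- Let (V, ‖·‖_V) and (W, ‖·‖_W) be real Banach spaces with V reflexive, let L : V → W be a bounded, surjective linear operator with Banach space adjoint L* : W* → V*, and let c ∈ W be a fixed vector. Then the minimum over x ∈ V with L(x) = c of ‖x‖_V equals the supremum over g ∈ W* with ‖L*(g)‖_{V*} ≤ 1 of g(c), and the minimum is attained. -/
/-!
Weak duality is `g c = (g ∘ L) x ≤ ‖x‖` for `L x = c`. For the converse and attainment, fix one
preimage `x₀` of `c` and restrict evaluation at `x₀` to the range of the adjoint `L*`. By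
homogeneity this functional has norm at most the supremum. A norm-preserving Hahn-Banach extension
to `V*` is, by reflexivity, evaluation at some `x : V` with the same norm, and agreeing with `x₀` on
the range of `L*` means `g (L x) = g c` for every `g`, hence `L x = c`.
-/

open NormedSpace

/-- A functional bounded by `C` on the range of `A` can be replaced by one of norm at most `C`
without changing its values on that range. -/
theorem exists_norm_le_eq_on_range {E F : Type*} [NormedAddCommGroup E] [NormedSpace ℝ E]
    [AddCommGroup F] [Module ℝ F] (A : F →ₗ[ℝ] E) (f : StrongDual ℝ E) {C : ℝ} (hC : 0 ≤ C)
    (h : ∀ y, |f (A y)| ≤ C * ‖A y‖) :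
    ∃ ψ : StrongDual ℝ E, ‖ψ‖ ≤ C ∧ ∀ y, ψ (A y) = f (A y) := by
  obtain ⟨ψ, hψ, hψn⟩ :=
    exists_extension_norm_eq (LinearMap.range A) (f.comp (LinearMap.range A).subtypeL)
  refine ⟨ψ, hψn.le.trans (ContinuousLinearMap.opNorm_le_bound _ hC ?_),
    fun y => hψ ⟨A y, y, rfl⟩⟩
  rintro ⟨_, y, rfl⟩
  exact h y

/-- **Constrained Norm Optimization in Banach spaces.**  Let `V`, `W` be real Banach spaces
with `V` reflexive (the canonical inclusion of `V` into its double dual is surjective), let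
`L : V → W` be a bounded surjective linear operator with Banach space adjoint
`L* : W* → V*`, `L* g = g ∘ L`, and let `c ∈ W`.  Then
`min { ‖x‖_V : L x = c } = sup { g c : ‖L* g‖_{V*} ≤ 1 }`, and the minimum is attained. -/
theorem stmt9 (V W : Type*)
    [NormedAddCommGroup V] [NormedSpace ℝ V] [CompleteSpace V]
    [NormedAddCommGroup W] [NormedSpace ℝ W] [CompleteSpace W]
    (hrefl : Function.Surjective (inclusionInDoubleDual ℝ V))
    (L : V →L[ℝ] W) (hL : Function.Surjective L) (c : W) :
    ∃ r : ℝ,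
      IsLeast {s : ℝ | ∃ x : V, L x = c ∧ s = ‖x‖} r ∧
      r = sSup {s : ℝ | ∃ g : W →L[ℝ] ℝ, ‖g.comp L‖ ≤ 1 ∧ s = g c} := by
  set S : Set ℝ := {s : ℝ | ∃ g : W →L[ℝ] ℝ, ‖g.comp L‖ ≤ 1 ∧ s = g c} with hS
  have weak : ∀ x, L x = c → ∀ s ∈ S, s ≤ ‖x‖ := by
    rintro x rfl s ⟨g, hg, rfl⟩
    calc g (L x) ≤ ‖(g.comp L) x‖ := Real.le_norm_self _
      _ ≤ 1 * ‖x‖ := (g.comp L).le_of_opNorm_le hg x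
      _ = ‖x‖ := one_mul _
  have hne : S.Nonempty := ⟨0, 0, by simp, by simp⟩
  obtain ⟨x₀, hx₀⟩ := hL c
  have hbdd : BddAbove S := ⟨‖x₀‖, weak x₀ hx₀⟩
  have hS0 : 0 ≤ sSup S := le_csSup hbdd ⟨0, by simp, by simp⟩
  have bound : ∀ g : W →L[ℝ] ℝ, g c ≤ sSup S * ‖g.comp L‖ := by
    intro g
    rcases (norm_nonneg (g.comp L)).eq_or_lt with h | h
    · have h0 : (g.comp L) x₀ = 0 := by rw [norm_eq_zero.mp h.symm]; simp
      rw [← h, mul_zero, ← hx₀]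
      exact h0.le
    · have hmem : ‖g.comp L‖⁻¹ * g c ∈ S := by
        refine ⟨‖g.comp L‖⁻¹ • g, ?_, by simp⟩
        rw [ContinuousLinearMap.smul_comp, norm_smul, norm_inv, norm_norm,
          inv_mul_cancel₀ h.ne']
      have := le_csSup hbdd hmem
      rwa [inv_mul_le_iff₀ h, mul_comm] at this
  obtain ⟨ψ, hψn, hψ⟩ := exists_norm_le_eq_on_range
    ((ContinuousLinearMap.compL ℝ V W ℝ).flip L).toLinearMap
    (inclusionInDoubleDual ℝ V x₀) hS0 (by
      intro g
      change |g (L x₀)| ≤ sSup S * ‖g.comp L‖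
      rw [hx₀]
      refine abs_le'.mpr ⟨bound g, ?_⟩
      simpa using bound (-g))
  obtain ⟨x, rfl⟩ := hrefl ψ
  have hx : L x = c := by
    refine (SeparatingDual.eq_iff_forall_dual_eq (R := ℝ)).mpr fun g => ?_
    rw [← hx₀]
    exact hψ g
  have hxn : ‖x‖ ≤ sSup S := by
    rw [← (inclusionInDoubleDualLi ℝ (E := V)).norm_map x]
    exact hψn
  refine ⟨sSup S, ⟨⟨x, hx, le_antisymm (csSup_le hne (weak x hx)) hxn⟩, ?_⟩, rfl⟩
  rintro _ ⟨y, hy, rfl⟩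
  exact csSup_le hne (weak y hy)
end

section
/- Let A ∈ ℝ^{m×n} and B ∈ ℝ^{l×n} with Ker(B) ⊆ Ker(A) (in particular this holds when B is injective). Then for every q ∈ [1,∞], the generalized matrix norm ‖A‖_{2↦q;B} equals the classical matrix norm ‖A·B⁺‖_{2↦q}, where B⁺ is the Moore–Penrose pseudoinverse of B. -/
/-!
The two suprema are taken over the same set.  As `B (v - B⁺ B v) = 0`, the kernel inclusion gives
`A v = A B⁺ (B v)`, so the value at `v` on the left is the value at `B v` on the right.  Conversely,
the value at `w` on the right is the value at `B⁺ w` on the left, and `B⁺ w` is admissible there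
because `B B⁺` is an orthogonal projection (symmetric and idempotent), hence a contraction for the
Euclidean norm.  Equality of the sets holds whether or not they are bounded.
-/

open Matrix
open scoped ENNReal

/-- The generalized matrix `p ↦ q ; B`-norm: `‖A‖_{p↦q;B} = sup { ‖A v‖_q : ‖B v‖_p ≤ 1 }`. -/
noncomputable def gnorm {m n l : ℕ} (A : Matrix (Fin m) (Fin n) ℝ)
    (B : Matrix (Fin l) (Fin n) ℝ) (p q : ℝ≥0∞) : ℝ :=
  sSup {r : ℝ | ∃ v : Fin n → ℝ, pNorm p (B.mulVec v) ≤ 1 ∧ r = pNorm q (A.mulVec v)}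

theorem pNorm_two_le_one_iff {k : ℕ} (x : Fin k → ℝ) : pNorm 2 x ≤ 1 ↔ x ⬝ᵥ x ≤ 1 := by
  have h : pNorm 2 x = √(x ⬝ᵥ x) := by
    simp [pNorm, Real.sqrt_eq_rpow, dotProduct, pow_two]
  rw [h, Real.sqrt_le_iff]
  simp

/-- An orthogonal projection does not increase the Euclidean norm. -/
theorem dotProduct_mulVec_self_le {k : ℕ} (P : Matrix (Fin k) (Fin k) ℝ)
    (hsymm : Pᵀ = P) (hidem : P * P = P) (w : Fin k → ℝ) :
    P *ᵥ w ⬝ᵥ P *ᵥ w ≤ w ⬝ᵥ w := by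
  have h1 : P *ᵥ w ⬝ᵥ P *ᵥ w = w ⬝ᵥ P *ᵥ w := by
    conv_rhs => rw [← hidem, ← mulVec_mulVec, dotProduct_mulVec, ← mulVec_transpose, hsymm]
  -- Pythagoras: `‖w‖² - ‖P w‖² = ‖w - P w‖²`.
  have h2 : 0 ≤ (w - P *ᵥ w) ⬝ᵥ (w - P *ᵥ w) :=
    Finset.sum_nonneg fun i _ => mul_self_nonneg _
  rw [sub_dotProduct, dotProduct_sub, dotProduct_sub, dotProduct_comm (P *ᵥ w) w, h1] at h2
  linarith

/-- Let `A ∈ ℝ^{m×n}` and `B ∈ ℝ^{l×n}` with `Ker B ⊆ Ker A` (in particular this holds when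
`B` is injective), and let `B⁺` be the Moore–Penrose pseudoinverse of `B` (characterized by
the four Penrose conditions).  Then for every `q ∈ [1,∞]`, the generalized matrix norm
`‖A‖_{2↦q;B}` equals the classical matrix norm `‖A·B⁺‖_{2↦q}`. -/
theorem stmt11 (m n l : ℕ)
    (A : Matrix (Fin m) (Fin n) ℝ) (B : Matrix (Fin l) (Fin n) ℝ)
    (hker : ∀ v : Fin n → ℝ, B.mulVec v = 0 → A.mulVec v = 0)
    (Bp : Matrix (Fin n) (Fin l) ℝ)
    (hPen1 : B * Bp * B = B) (hPen2 : Bp * B * Bp = Bp)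
    (hPen3 : (B * Bp)ᵀ = B * Bp) (hPen4 : (Bp * B)ᵀ = Bp * B)
    (q : ℝ≥0∞) (hq : 1 ≤ q) :
    gnorm A B 2 q =
      sSup {r : ℝ | ∃ v : Fin l → ℝ, pNorm 2 v ≤ 1 ∧ r = pNorm q ((A * Bp).mulVec v)} := by
  unfold gnorm
  congr 1
  ext r
  constructor
  · rintro ⟨v, hv, rfl⟩
    refine ⟨B *ᵥ v, hv, ?_⟩
    have h := hker (v - Bp *ᵥ (B *ᵥ v)) (by
      rw [mulVec_sub, mulVec_mulVec, mulVec_mulVec, hPen1, sub_self])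
    rw [mulVec_sub, sub_eq_zero] at h
    rw [h, mulVec_mulVec]
  · rintro ⟨w, hw, rfl⟩
    refine ⟨Bp *ᵥ w, ?_, by rw [mulVec_mulVec]⟩
    rw [pNorm_two_le_one_iff] at hw ⊢
    rw [mulVec_mulVec]
    exact (dotProduct_mulVec_self_le (B * Bp) hPen3
      (by rw [← Matrix.mul_assoc, hPen1]) w).trans hw
end

section
/- Let A ∈ ℝ^{m×n} and B ∈ ℝ^{l×n} with B injective, and let p ∈ [2,∞). Then ‖A‖_{p↦1;B} ≤ (1/2)·min over (v,w) ∈ K of ( ‖v‖_1 + ‖w‖_{p/(p−2)} ) ≤ (γ_p/γ_1)·‖A‖_{p↦1;B}, where the exponent p/(p−2) is interpreted as ∞ when p = 2. -/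
/-!
The first inequality is weak duality: for `(v, w) ∈ K`, testing the block matrix against
`(sign (A x), x)` gives `2 ‖A x‖₁ ≤ ‖v‖₁ + ∑ w_j (B x)_j²`, and Hölder's inequality with exponents
`p/(p-2)` and `p/2` bounds the last sum by `‖w‖_{p/(p-2)}` when `‖B x‖_p ≤ 1`.

For the second inequality write `s_i = √((A X Aᵀ)_ii)` and `d_j = (B X Bᵀ)_jj` for a positive
semidefinite `X`, and let `X` maximise `F = ∑ s_i` subject to `∑ d_j^{p/2} = 1`; the feasible set is
compact because `B` has a left inverse.

* Differentiating along `X + ε h hᵀ` at `ε = 0⁺` yields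
  `∑ (A h)_i² / s_i ≤ F ∑ d_j^{p/2-1} (B h)_j²`. Here `s_i = 0` forces the `i`-th row of `A` to
  vanish, since otherwise `F` would grow like `√ε` while the constraint only moves by `O(ε)`.
  By completing squares, `v = s` and `w_j = F d_j^{p/2-1}` lie in `K`, and
  `‖v‖₁ + ‖w‖_{p/(p-2)} ≤ 2F` (`strong_duality`).
* Factor `X = M Mᵀ` and let `x = M g` with `g` standard Gaussian. Then `E ‖A x‖₁ = γ_1 F`, while
  `E ‖A x‖₁ ≤ ‖A‖ E ‖B x‖_p ≤ ‖A‖ (E ‖B x‖_p^p)^{1/p} = ‖A‖ γ_p` (`rounding`). Hence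
  `F ≤ (γ_p / γ_1) ‖A‖`.
-/

open Matrix
open scoped ENNReal

/-- `γ_s`, the `s`-th root of the `s`-th absolute moment of a standard Gaussian random
variable: `γ_s = (2^{s/2} Γ((s+1)/2) / √π)^{1/s}`. -/
noncomputable def gam (s : ℝ) : ℝ :=
  ((2 : ℝ) ^ (s / 2) * Real.Gamma ((s + 1) / 2) / Real.sqrt Real.pi) ^ (1 / s)

/-- The feasible set `K`: pairs `(v, w)` such that the block matrix
`[[Diag v, −A], [−Aᵀ, Bᵀ Diag w B]]` is positive semidefinite. -/
def Kset {m n l : ℕ} (A : Matrix (Fin m) (Fin n) ℝ) (B : Matrix (Fin l) (Fin n) ℝ) :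
    Set ((Fin m → ℝ) × (Fin l → ℝ)) :=
  {vw | (fromBlocks (diagonal vw.1) (-A) (-Aᵀ) (Bᵀ * diagonal vw.2 * B)).PosSemidef}

/-! ### Absolute moments of Gaussian variables -/

open MeasureTheory ProbabilityTheory in
lemma gaussian_abs_moment {s : ℝ} (hs : 0 < s) :
    ∫ x, |x| ^ s ∂(gaussianReal 0 1) = gam s ^ s := by
  rw [integral_gaussianReal_eq_integral_smul one_ne_zero]
  have h1 : ∀ x : ℝ, gaussianPDFReal 0 1 x • |x| ^ s =
      (fun y : ℝ => (Real.sqrt (2 * Real.pi))⁻¹ * (y ^ s * Real.exp (-(1 / 2) * y ^ (2 : ℝ)))) |x| := by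
    intro x
    simp only [gaussianPDFReal, smul_eq_mul, NNReal.coe_one, mul_one, sub_zero]
    rw [Real.rpow_two, sq_abs]
    ring_nf
  simp_rw [h1]
  rw [integral_comp_abs (f := fun y : ℝ => (Real.sqrt (2 * Real.pi))⁻¹ *
    (y ^ s * Real.exp (-(1 / 2) * y ^ (2 : ℝ)))), integral_const_mul,
    integral_rpow_mul_exp_neg_mul_rpow two_pos (by linarith) (by norm_num)]
  have hG : 0 < Real.Gamma ((s + 1) / 2) := Real.Gamma_pos_of_pos (by linarith)
  rw [gam, ← Real.rpow_mul (by positivity), one_div_mul_cancel hs.ne', Real.rpow_one,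
    Real.sqrt_mul (by norm_num), one_div, Real.inv_rpow (by norm_num), ← Real.rpow_neg (by norm_num)]
  rw [show -(-(s + 1) / 2) = s / 2 + 1 / 2 by ring, Real.rpow_add (by norm_num), ← Real.sqrt_eq_rpow]
  field_simp

lemma gam_pos {s : ℝ} (hs : 0 < s) : 0 < gam s := by
  have hG : 0 < Real.Gamma ((s + 1) / 2) := Real.Gamma_pos_of_pos (by linarith)
  unfold gam
  positivity

open MeasureTheory ProbabilityTheory in
/-- A linear functional of a standard Gaussian vector is distributed as `‖c‖` times a standard
Gaussian variable. -/
lemma stdGaussian_map_inner {n : ℕ} (c : EuclideanSpace ℝ (Fin n)) :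
    (stdGaussian (EuclideanSpace ℝ (Fin n))).map (fun x => inner ℝ c x) =
      (gaussianReal 0 1).map (fun t => ‖c‖ * t) := by
  have h := IsGaussian.map_eq_gaussianReal (μ := stdGaussian (EuclideanSpace ℝ (Fin n)))
    (innerSL ℝ c)
  rw [integral_strongDual_stdGaussian, variance_dual_stdGaussian] at h
  rw [gaussianReal_map_const_mul]
  have e : NNReal.mk (‖c‖ ^ 2) (sq_nonneg _) * 1 = (‖innerSL ℝ c‖ ^ 2).toNNReal := by
    apply NNReal.coe_injective
    simp
  rw [mul_zero]
  exact h.trans (by rw [← e])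

open MeasureTheory ProbabilityTheory in
lemma stdGaussian_abs_moment {n : ℕ} (c : EuclideanSpace ℝ (Fin n)) {s : ℝ} (hs : 0 < s) :
    Integrable (fun x => |inner ℝ c x| ^ s) (stdGaussian (EuclideanSpace ℝ (Fin n))) ∧
    ∫ x, |inner ℝ c x| ^ s ∂(stdGaussian (EuclideanSpace ℝ (Fin n))) = ‖c‖ ^ s * gam s ^ s := by
  have hm : AEMeasurable (fun x => inner ℝ c x) (stdGaussian (EuclideanSpace ℝ (Fin n))) := by
    fun_prop
  have hc : Continuous (fun t : ℝ => |t| ^ s) :=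
    continuous_abs.rpow_const (fun _ => Or.inr hs.le)
  have h0 : Integrable (fun t : ℝ => |t| ^ s) (gaussianReal 0 1) := by
    simpa [Real.coe_toNNReal s hs.le] using
      (memLp_id_gaussianReal (μ := 0) (v := 1) s.toNNReal).integrable_norm_rpow'
  have key : ∀ t : ℝ, |‖c‖ * t| ^ s = ‖c‖ ^ s * |t| ^ s := by
    intro t
    rw [abs_mul, abs_norm, Real.mul_rpow (norm_nonneg _) (abs_nonneg _)]
  constructor
  · have : Integrable (fun t : ℝ => |t| ^ s)
        ((stdGaussian (EuclideanSpace ℝ (Fin n))).map (fun x => inner ℝ c x)) := by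
      rw [stdGaussian_map_inner, integrable_map_measure hc.aestronglyMeasurable (by fun_prop)]
      simp only [Function.comp_def, key]
      exact h0.const_mul _
    exact this.comp_aemeasurable hm
  · have := integral_map hm (f := fun t : ℝ => |t| ^ s) hc.aestronglyMeasurable
    rw [← this, stdGaussian_map_inner, integral_map (by fun_prop) hc.aestronglyMeasurable]
    simp only [key]
    rw [integral_const_mul, gaussian_abs_moment hs]
/-! ### The feasible set and weak duality -/

/-- Membership in `K`, spelled out as nonnegativity of the quadratic form. -/
lemma mem_Kset_iff {m n l : ℕ} {A : Matrix (Fin m) (Fin n) ℝ} {B : Matrix (Fin l) (Fin n) ℝ}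
    {v : Fin m → ℝ} {w : Fin l → ℝ} :
    (v, w) ∈ Kset A B ↔ ∀ (y : Fin m → ℝ) (h : Fin n → ℝ),
      0 ≤ ∑ i, v i * y i ^ 2 - 2 * ∑ i, y i * A.mulVec h i + ∑ j, w j * B.mulVec h j ^ 2 := by
  have key : ∀ (y : Fin m → ℝ) (h : Fin n → ℝ),
      star (Sum.elim y h) ⬝ᵥ
        (fromBlocks (diagonal v) (-A) (-Aᵀ) (Bᵀ * diagonal w * B) *ᵥ (Sum.elim y h)) =
      ∑ i, v i * y i ^ 2 - 2 * ∑ i, y i * A.mulVec h i + ∑ j, w j * B.mulVec h j ^ 2 := by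
    intro y h
    rw [fromBlocks_mulVec, star_trivial, ← Sum.elim_comp_inl_inr (Sum.elim y h)]
    simp only [Sum.elim_comp_inl, Sum.elim_comp_inr]
    rw [sumElim_dotProduct_sumElim]
    rw [dotProduct_add, dotProduct_add, neg_mulVec, neg_mulVec, dotProduct_neg, dotProduct_neg,
      dotProduct_mulVec h, vecMul_transpose, dotProduct_comm (A *ᵥ h) y,
      ← mulVec_mulVec, ← mulVec_mulVec, dotProduct_mulVec h Bᵀ, vecMul_transpose]
    simp only [dotProduct, mulVec_diagonal]
    have e1 : ∑ i, y i * (v i * y i) = ∑ i, v i * y i ^ 2 :=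
      Finset.sum_congr rfl fun i _ => by ring
    have e2 : ∑ j, (B *ᵥ h) j * (w j * (B *ᵥ h) j) = ∑ j, w j * (B *ᵥ h) j ^ 2 :=
      Finset.sum_congr rfl fun i _ => by ring
    rw [e1, e2]
    ring
  have hh : (fromBlocks (diagonal v) (-A) (-Aᵀ) (Bᵀ * diagonal w * B)).IsHermitian := by
    rw [IsHermitian, conjTranspose_eq_transpose_of_trivial, fromBlocks_transpose]
    simp [Matrix.mul_assoc]
  constructor
  · intro h y x
    rw [← key]
    exact (posSemidef_iff_dotProduct_mulVec.1 h).2 _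
  · intro h
    refine PosSemidef.of_dotProduct_mulVec_nonneg hh fun x => ?_
    rw [← Sum.elim_comp_inl_inr x, key]
    exact h _ _

lemma pNorm_ofReal {k : ℕ} {p : ℝ} (hp : 0 ≤ p) (x : Fin k → ℝ) :
    pNorm (ENNReal.ofReal p) x = (∑ i, |x i| ^ p) ^ (1 / p) := by
  simp [pNorm, ENNReal.toReal_ofReal hp]

lemma sum_le_one_of_pNorm {k : ℕ} {p : ℝ} (hp : 0 < p) {x : Fin k → ℝ}
    (h : pNorm (ENNReal.ofReal p) x ≤ 1) : ∑ i, |x i| ^ p ≤ 1 := by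
  rw [pNorm_ofReal hp.le] at h
  have h0 : 0 ≤ ∑ i, |x i| ^ p := Finset.sum_nonneg fun i _ => by positivity
  by_contra hc
  push Not at hc
  exact absurd h (not_le.2 (Real.one_lt_rpow hc (by positivity)))

lemma abs_rpow_eq_sq_rpow (t p : ℝ) : |t| ^ p = (t ^ 2) ^ (p / 2) := by
  rw [← sq_abs, ← Real.rpow_natCast, ← Real.rpow_mul (abs_nonneg _)]
  congr 1
  push_cast
  ring

/-- Hölder's inequality with exponents `p/(p-2)` and `p/2`. -/
lemma sum_mul_sq_le {l : ℕ} {p : ℝ} (hp : 2 ≤ p) (w z : Fin l → ℝ)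
    (hz : pNorm (ENNReal.ofReal p) z ≤ 1) :
    ∑ j, w j * z j ^ 2 ≤
      pNorm (if p = 2 then (∞ : ℝ≥0∞) else ENNReal.ofReal (p / (p - 2))) w := by
  have hz' := sum_le_one_of_pNorm (by linarith) hz
  split_ifs with h2
  · subst h2
    have hs : ∀ j, |w j| ≤ ⨆ i, |w i| := fun j =>
      le_ciSup (f := fun i => |w i|) (Set.finite_range _).bddAbove j
    have h0 : 0 ≤ ⨆ i, |w i| := Real.iSup_nonneg fun i => abs_nonneg _
    simp only [Real.rpow_two, sq_abs] at hz'
    simp only [pNorm, if_true]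
    calc ∑ j, w j * z j ^ 2 ≤ ∑ j, (⨆ i, |w i|) * z j ^ 2 :=
          Finset.sum_le_sum fun j _ =>
            mul_le_mul_of_nonneg_right ((le_abs_self _).trans (hs j)) (sq_nonneg _)
      _ = (⨆ i, |w i|) * ∑ j, z j ^ 2 := by rw [Finset.mul_sum]
      _ ≤ (⨆ i, |w i|) * 1 := mul_le_mul_of_nonneg_left hz' h0
      _ = _ := mul_one _
  · have hp2 : 2 < p := lt_of_le_of_ne hp (Ne.symm h2)
    have hp3 : 0 < p - 2 := by linarith
    have hq : (p / (p - 2)).HolderConjugate (p / 2) := by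
      rw [Real.holderConjugate_iff]
      refine ⟨by rw [lt_div_iff₀ hp3]; linarith, ?_⟩
      field_simp
      ring
    rw [pNorm_ofReal (by positivity)]
    refine (Real.inner_le_Lp_mul_Lq Finset.univ w (fun j => z j ^ 2) hq).trans ?_
    refine mul_le_of_le_one_right (by positivity) ?_
    refine Real.rpow_le_one (by positivity) ?_ (by positivity)
    simpa only [abs_sq, ← abs_rpow_eq_sq_rpow] using hz'

/-- Weak duality: every point of `K` bounds `‖A x‖₁` from above on the unit ball `‖B x‖_p ≤ 1`. -/
lemma pNorm_one_le_of_mem_Kset {m n l : ℕ} {A : Matrix (Fin m) (Fin n) ℝ}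
    {B : Matrix (Fin l) (Fin n) ℝ} {p : ℝ} (hp : 2 ≤ p) {v : Fin m → ℝ} {w : Fin l → ℝ}
    (hK : (v, w) ∈ Kset A B) (x : Fin n → ℝ)
    (hx : pNorm (ENNReal.ofReal p) (B.mulVec x) ≤ 1) :
    pNorm 1 (A.mulVec x) ≤ (1 / 2) * (pNorm 1 v +
      pNorm (if p = 2 then (∞ : ℝ≥0∞) else ENNReal.ofReal (p / (p - 2))) w) := by
  have h := mem_Kset_iff.1 hK (fun i => (SignType.sign (A.mulVec x i) : ℝ)) x
  have h1 := sum_mul_sq_le hp w _ hx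
  simp only [sign_mul_self] at h
  have h2 : ∑ i, v i * (SignType.sign (A.mulVec x i) : ℝ) ^ 2 ≤ ∑ i, |v i| := by
    refine Finset.sum_le_sum fun i _ => ?_
    rcases SignType.sign (A.mulVec x i) with _ | _ | _ <;> simp [le_abs_self]
  rw [pNorm_one, pNorm_one]
  linarith

/-! ### Gaussian rounding -/

/-- Gaussian rounding: evaluating the bound `‖A x‖₁ ≤ N ‖B x‖_p` at `x = M g` with `g` standard
Gaussian and taking expectations. -/
lemma rounding {m n l : ℕ} (A : Matrix (Fin m) (Fin n) ℝ) (B : Matrix (Fin l) (Fin n) ℝ)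
    {p : ℝ} (hp : 2 ≤ p) (M : Matrix (Fin n) (Fin n) ℝ)
    (hM : ∑ j, ((B * (M * Mᵀ) * Bᵀ) j j) ^ (p / 2) ≤ 1) {N : ℝ} (hN0 : 0 ≤ N)
    (hN : ∀ x, ∑ i, |A.mulVec x i| ≤ N * (∑ j, |B.mulVec x j| ^ p) ^ (1 / p)) :
    gam 1 * ∑ i, √((A * (M * Mᵀ) * Aᵀ) i i) ≤ N * gam p := by
  have hp0 : 0 < p := by linarith
  have hc := gam_pos hp0
  set c := gam p
  have hdiag : ∀ {k : ℕ} (Q : Matrix (Fin k) (Fin n) ℝ) (i : Fin k),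
      (Q * (M * Mᵀ) * Qᵀ) i i = ‖WithLp.toLp 2 ((Q * M) i)‖ ^ 2 := by
    intro k Q i
    rw [EuclideanSpace.real_norm_sq_eq]
    rw [show Q * (M * Mᵀ) * Qᵀ = (Q * M) * (Q * M)ᵀ by
      simp [Matrix.mul_assoc, transpose_mul]]
    rw [mul_apply]
    simp [sq]
  have happ : ∀ {k : ℕ} (Q : Matrix (Fin k) (Fin n) ℝ) (i : Fin k)
      (g : EuclideanSpace ℝ (Fin n)),
      Q.mulVec (M.mulVec (WithLp.ofLp g)) i = inner ℝ (WithLp.toLp 2 ((Q * M) i)) g := by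
    intro k Q i g
    rw [mulVec_mulVec, PiLp.inner_apply]
    simp [mulVec, dotProduct, mul_comm]
  -- Weighted AM-GM linearises `T ^ (1/p)` at `T = c ^ p`, which plays the role of the Jensen
  -- inequality `E ‖B x‖_p ≤ (E ‖B x‖_p ^ p) ^ (1/p)`.
  have hpt : ∀ g : EuclideanSpace ℝ (Fin n),
      c ^ (p - 1) * ∑ i, |inner ℝ (WithLp.toLp 2 ((A * M) i)) g| ^ (1 : ℝ) ≤
      N * ((1 / p) * ∑ j, |inner ℝ (WithLp.toLp 2 ((B * M) j)) g| ^ p + (1 - 1 / p) * c ^ p) := by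
    intro g
    have h1 := hN (M.mulVec (WithLp.ofLp g))
    simp only [happ] at h1
    simp only [Real.rpow_one]
    have hp1 : 1 / p ≤ 1 := by rw [div_le_one hp0]; linarith
    have h2 := Real.geom_mean_le_arith_mean2_weighted (w₁ := 1 / p) (w₂ := 1 - 1 / p)
      (p₁ := ∑ j, |inner ℝ (WithLp.toLp 2 ((B * M) j)) g| ^ p) (p₂ := c ^ p)
      (by positivity) (by linarith) (Finset.sum_nonneg fun _ _ => by positivity) (by positivity)
      (by ring)
    rw [← Real.rpow_mul hc.le, show p * (1 - 1 / p) = p - 1 by field_simp] at h2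
    calc _ ≤ c ^ (p - 1) * (N * _) := mul_le_mul_of_nonneg_left h1 (by positivity)
      _ = N * (_ * c ^ (p - 1)) := by ring
      _ ≤ _ := mul_le_mul_of_nonneg_left h2 hN0
  have hI1 : ∀ i, _ := fun i => stdGaussian_abs_moment (WithLp.toLp 2 ((A * M) i)) one_pos
  have hIp : ∀ j, _ := fun j => stdGaussian_abs_moment (WithLp.toLp 2 ((B * M) j)) hp0
  have hexp := MeasureTheory.integral_mono
    ((MeasureTheory.integrable_finsetSum _ fun i _ => (hI1 i).1).const_mul (c ^ (p - 1)))
    ((((MeasureTheory.integrable_finsetSum _ fun j _ => (hIp j).1).const_mul (1 / p)).add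
      (MeasureTheory.integrable_const ((1 - 1 / p) * c ^ p))).const_mul N) hpt
  simp only [Pi.add_apply] at hexp
  rw [MeasureTheory.integral_const_mul, MeasureTheory.integral_const_mul,
    MeasureTheory.integral_add
      ((MeasureTheory.integrable_finsetSum _ fun j _ => (hIp j).1).const_mul (1 / p))
      (MeasureTheory.integrable_const _), MeasureTheory.integral_const_mul,
    MeasureTheory.integral_finsetSum _ fun i _ => (hI1 i).1,
    MeasureTheory.integral_finsetSum _ fun j _ => (hIp j).1] at hexp
  simp only [(hI1 _).2, (hIp _).2, ← Finset.sum_mul] at hexp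
  simp only [Real.rpow_one] at hexp
  simp only [MeasureTheory.integral_const, MeasureTheory.probReal_univ, one_smul] at hexp
  have hM' : ∑ j, ‖WithLp.toLp 2 ((B * M) j)‖ ^ p ≤ 1 := by
    refine le_trans (le_of_eq ?_) hM
    refine Finset.sum_congr rfl fun j _ => ?_
    rw [hdiag, ← abs_rpow_eq_sq_rpow, abs_norm]
  simp only [hdiag, Real.sqrt_sq (norm_nonneg _)]
  have hcp : c ^ p = c ^ (p - 1) * c := by
    rw [Real.rpow_sub_one hc.ne']; field_simp
  have hcpos : 0 < c ^ (p - 1) := by positivity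
  refine le_of_mul_le_mul_left ?_ hcpos
  calc _ = c ^ (p - 1) * ((∑ i, ‖WithLp.toLp 2 ((A * M) i)‖) * gam 1) := by ring
    _ ≤ _ := hexp
    _ ≤ N * (1 / p * (1 * c ^ p) + (1 - 1 / p) * c ^ p) := by gcongr
    _ = _ := by rw [hcp]; ring
/-! ### Existence of an optimal covariance matrix -/

lemma exists_left_inv {n l : ℕ} {B : Matrix (Fin l) (Fin n) ℝ}
    (hB : Function.Injective B.mulVec) : ∃ L : Matrix (Fin n) (Fin l) ℝ, L * B = 1 := by
  obtain ⟨g, hg⟩ := LinearMap.exists_leftInverse_of_injective B.mulVecLin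
    (LinearMap.ker_eq_bot.2 hB)
  refine ⟨LinearMap.toMatrix' g, ?_⟩
  have := congrArg LinearMap.toMatrix' hg
  rwa [LinearMap.toMatrix'_comp, LinearMap.toMatrix'_id, ← Matrix.toLin'_apply',
    LinearMap.toMatrix'_toLin'] at this

lemma diag_conj_nonneg {n k : ℕ} {X : Matrix (Fin n) (Fin n) ℝ} (hX : X.PosSemidef)
    (Q : Matrix (Fin k) (Fin n) ℝ) (i : Fin k) : 0 ≤ (Q * X * Qᵀ) i i := by
  have := (hX.mul_mul_conjTranspose_same Q).diag_nonneg (i := i)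
  simpa using this

lemma abs_entry_le_one {l : ℕ} {Y : Matrix (Fin l) (Fin l) ℝ} (hY : Y.PosSemidef)
    (h1 : ∀ j, Y j j ≤ 1) (j k : Fin l) : |Y j k| ≤ 1 := by
  have hs : Y k j = Y j k := by
    have := hY.1.apply j k
    simpa using this
  have key : ∀ t : ℝ, 0 ≤ Y j j + t * Y j k + t * Y k j + t * t * Y k k := by
    intro t
    have := (posSemidef_iff_dotProduct_mulVec.1 hY).2 (Pi.single j 1 + t • Pi.single k 1)
    simp only [star_trivial, mulVec_add, mulVec_smul, mulVec_single_one, add_dotProduct,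
      dotProduct_add, smul_dotProduct, dotProduct_smul, single_one_dotProduct, smul_eq_mul,
      col_apply] at this
    linarith
  have ha := key 1
  have hb := key (-1)
  have := h1 j
  have := h1 k
  rw [abs_le]
  constructor <;> linarith

/-- The feasible set is the image, under `Y ↦ L Y Lᵀ` for a left inverse `L` of `B`, of a set of
matrices `Y = B X Bᵀ` with entries in `[-1, 1]`. -/
lemma isCompact_feasible {n l : ℕ} {B : Matrix (Fin l) (Fin n) ℝ}
    (hB : Function.Injective B.mulVec) {r : ℝ} (hr : 0 < r) :
    IsCompact {X : Matrix (Fin n) (Fin n) ℝ |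
      X.PosSemidef ∧ ∑ j, ((B * X * Bᵀ) j j) ^ r = 1} := by
  obtain ⟨L, hL⟩ := exists_left_inv hB
  have hK : IsCompact (Set.pi Set.univ fun _ : Fin l => Set.pi Set.univ fun _ : Fin l =>
      Set.Icc (-1 : ℝ) 1) := isCompact_univ_pi fun _ => isCompact_univ_pi fun _ => isCompact_Icc
  have hcont : Continuous (fun Y : Matrix (Fin l) (Fin l) ℝ => L * Y * Lᵀ) := by fun_prop
  refine (hK.image hcont).of_isClosed_subset ?_ ?_
  · simp only [posSemidef_iff_dotProduct_mulVec, IsHermitian]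
    refine IsClosed.inter (IsClosed.inter (isClosed_eq (by fun_prop) (by fun_prop)) ?_) ?_
    · have hcl : IsClosed (⋂ x : Fin n → ℝ,
          {X : Matrix (Fin n) (Fin n) ℝ | 0 ≤ star x ⬝ᵥ (X *ᵥ x)}) :=
        isClosed_iInter fun x => isClosed_le continuous_const (by fun_prop)
      change IsClosed {X : Matrix (Fin n) (Fin n) ℝ | ∀ x, 0 ≤ star x ⬝ᵥ (X *ᵥ x)}
      convert! hcl using 1
      ext X
      rw [Set.mem_iInter]
      rfl
    · refine isClosed_eq (continuous_finsetSum _ fun j _ => ?_) continuous_const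
      refine Continuous.rpow_const ?_ fun _ => Or.inr hr.le
      have : Continuous (fun X : Matrix (Fin n) (Fin n) ℝ => B * X * Bᵀ) := by fun_prop
      exact this.matrix_elem j j
  · rintro X ⟨hX, hs⟩
    refine ⟨B * X * Bᵀ, ?_, ?_⟩
    · have hd : ∀ j, (B * X * Bᵀ) j j ≤ 1 := by
        intro j
        have h0 := diag_conj_nonneg hX B
        have : ((B * X * Bᵀ) j j) ^ r ≤ 1 := by
          rw [← hs]
          exact Finset.single_le_sum (f := fun j => ((B * X * Bᵀ) j j) ^ r)
            (fun i _ => Real.rpow_nonneg (h0 i) _) (Finset.mem_univ j)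
        by_contra hc
        push Not at hc
        exact absurd this (not_le.2 (Real.one_lt_rpow hc hr))
      have hY : (B * X * Bᵀ).PosSemidef := by simpa using hX.mul_mul_conjTranspose_same B
      intro j _ k _
      exact abs_le.1 (abs_entry_le_one hY hd j k)
    · have e : L * (B * X * Bᵀ) * Lᵀ = (L * B) * X * (L * B)ᵀ := by
        simp [Matrix.mul_assoc, transpose_mul]
      simp only [e, hL]
      simp

lemma diag_conj_vecMulVec {n k : ℕ} (X : Matrix (Fin n) (Fin n) ℝ) (h : Fin n → ℝ) (ε : ℝ)
    (Q : Matrix (Fin k) (Fin n) ℝ) (i : Fin k) :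
    (Q * (X + ε • vecMulVec h h) * Qᵀ) i i = (Q * X * Qᵀ) i i + ε * (Q.mulVec h i) ^ 2 := by
  rw [Matrix.mul_add, Matrix.add_mul, Matrix.add_apply, Matrix.mul_smul, Matrix.smul_mul, Matrix.smul_apply,
    mul_vecMulVec, vecMulVec_mul, vecMul_transpose, vecMulVec_apply]
  simp [sq]

lemma posSemidef_vecMulVec {n : ℕ} (h : Fin n → ℝ) : (vecMulVec h h).PosSemidef := by
  simpa using posSemidef_vecMulVec_self_star h

/-- A maximiser of `∑ √((A X Aᵀ)_ii)` on the feasible set exists; its optimality is stated for all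
positive semidefinite `Y`, using that the objective has degree `1/2` and the constraint degree
`p/2` in `Y`. -/
lemma exists_maximiser {m n l : ℕ} (A : Matrix (Fin m) (Fin n) ℝ) {B : Matrix (Fin l) (Fin n) ℝ}
    (hB : Function.Injective B.mulVec) {p : ℝ} (hp : 0 < p) {h₀ : Fin n → ℝ} (h_ne : h₀ ≠ 0) :
    ∃ X : Matrix (Fin n) (Fin n) ℝ, X.PosSemidef ∧ ∑ j, ((B * X * Bᵀ) j j) ^ (p / 2) = 1 ∧
      ∀ Y : Matrix (Fin n) (Fin n) ℝ, Y.PosSemidef → 0 < ∑ j, ((B * Y * Bᵀ) j j) ^ (p / 2) →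
        ∑ i, √((A * Y * Aᵀ) i i) ≤
          (∑ i, √((A * X * Aᵀ) i i)) * (∑ j, ((B * Y * Bᵀ) j j) ^ (p / 2)) ^ (1 / p) := by
  have hscale : ∀ Y : Matrix (Fin n) (Fin n) ℝ, Y.PosSemidef →
      0 < ∑ j, ((B * Y * Bᵀ) j j) ^ (p / 2) → ∃ t : ℝ, 0 < t ∧
      √t = (∑ j, ((B * Y * Bᵀ) j j) ^ (p / 2)) ^ (1 / p) ∧ (t⁻¹ • Y).PosSemidef ∧
      ∑ j, ((B * (t⁻¹ • Y) * Bᵀ) j j) ^ (p / 2) = 1 := by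
    intro Y hY hG
    set G := ∑ j, ((B * Y * Bᵀ) j j) ^ (p / 2) with hGdef
    refine ⟨G ^ (2 / p), by positivity, ?_, hY.smul (by positivity), ?_⟩
    · rw [Real.sqrt_eq_rpow, ← Real.rpow_mul hG.le]
      congr 1
      field_simp
    · simp only [Matrix.mul_smul, Matrix.smul_mul, Matrix.smul_apply, smul_eq_mul]
      have : ∀ j, ((G ^ (2 / p))⁻¹ * (B * Y * Bᵀ) j j) ^ (p / 2) =
          G⁻¹ * ((B * Y * Bᵀ) j j) ^ (p / 2) := by
        intro j
        rw [Real.mul_rpow (by positivity) (diag_conj_nonneg hY B j),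
          Real.inv_rpow (by positivity), ← Real.rpow_mul hG.le]
        rw [show 2 / p * (p / 2) = 1 by field_simp, Real.rpow_one]
      simp only [this, ← Finset.mul_sum, ← hGdef]
      exact inv_mul_cancel₀ hG.ne'
  have hcomp := isCompact_feasible hB (r := p / 2) (by positivity)
  have hne : {X : Matrix (Fin n) (Fin n) ℝ |
      X.PosSemidef ∧ ∑ j, ((B * X * Bᵀ) j j) ^ (p / 2) = 1}.Nonempty := by
    have hBh : B.mulVec h₀ ≠ 0 := fun h => h_ne (hB (by rw [h, mulVec_zero]))
    obtain ⟨j, hj⟩ := Function.ne_iff.1 hBh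
    have hpos : 0 < ∑ j, ((B * vecMulVec h₀ h₀ * Bᵀ) j j) ^ (p / 2) := by
      have hn := diag_conj_nonneg (posSemidef_vecMulVec h₀) B
      refine Finset.sum_pos' (fun i _ => Real.rpow_nonneg (hn i) _) ⟨j, Finset.mem_univ _, ?_⟩
      refine Real.rpow_pos_of_pos ?_ _
      have := diag_conj_vecMulVec 0 h₀ 1 B j
      simp only [zero_add, one_smul, Matrix.mul_zero, Matrix.zero_mul, Matrix.zero_apply, one_mul] at this
      rw [this]
      exact sq_pos_of_ne_zero hj
    obtain ⟨t, _, _, h1, h2⟩ := hscale _ (posSemidef_vecMulVec h₀) hpos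
    exact ⟨_, h1, h2⟩
  have hf : Continuous (fun X : Matrix (Fin n) (Fin n) ℝ => ∑ i, √((A * X * Aᵀ) i i)) := by
    refine continuous_finsetSum _ fun i _ => Real.continuous_sqrt.comp ?_
    have : Continuous (fun X : Matrix (Fin n) (Fin n) ℝ => A * X * Aᵀ) := by fun_prop
    exact this.matrix_elem i i
  obtain ⟨X, ⟨hX, hs⟩, hmax⟩ := hcomp.exists_isMaxOn hne hf.continuousOn
  refine ⟨X, hX, hs, fun Y hY hG => ?_⟩
  obtain ⟨t, ht, hte, h1, h2⟩ := hscale Y hY hG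
  have := hmax (show t⁻¹ • Y ∈ _ from ⟨h1, h2⟩)
  simp only [Set.mem_ofPred_eq, Matrix.mul_smul, Matrix.smul_mul, Matrix.smul_apply, smul_eq_mul] at this
  rw [← hte]
  have e : ∀ i, √(t⁻¹ * (A * Y * Aᵀ) i i) = (√t)⁻¹ * √((A * Y * Aᵀ) i i) := by
    intro i
    rw [Real.sqrt_mul (by positivity), Real.sqrt_inv]
  simp only [e, ← Finset.mul_sum] at this
  rwa [inv_mul_le_iff₀ (by positivity), mul_comm] at this
/-! ### Strong duality from the first-order optimality conditions -/

/-- The first-order condition at a maximiser `X` says exactly that the pair formed by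
`√((A X Aᵀ)_ii)` and the gradient of the constraint lies in `K`. -/
lemma strong_duality_aux {m n l : ℕ} (A : Matrix (Fin m) (Fin n) ℝ)
    {B : Matrix (Fin l) (Fin n) ℝ} (hB : Function.Injective B.mulVec) {p : ℝ} (hp : 2 ≤ p)
    {h₀ : Fin n → ℝ} (h_ne : h₀ ≠ 0) :
    ∃ X : Matrix (Fin n) (Fin n) ℝ, X.PosSemidef ∧ ∑ j, ((B * X * Bᵀ) j j) ^ (p / 2) = 1 ∧
      (fun i => √((A * X * Aᵀ) i i), fun j => (∑ i, √((A * X * Aᵀ) i i)) *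
        ((B * X * Bᵀ) j j) ^ (p / 2 - 1)) ∈ Kset A B := by
  have hp0 : 0 < p := by linarith
  obtain ⟨X, hX, hs, hmax⟩ := exists_maximiser A hB hp0 h_ne
  refine ⟨X, hX, hs, ?_⟩
  set F := ∑ i, √((A * X * Aᵀ) i i) with hF
  have ha0 : ∀ i, 0 ≤ (A * X * Aᵀ) i i := diag_conj_nonneg hX A
  have hd0 : ∀ j, 0 ≤ (B * X * Bᵀ) j j := diag_conj_nonneg hX B
  obtain ⟨a, ha'⟩ : ∃ a : Fin m → ℝ, ∀ i, (A * X * Aᵀ) i i = a i := ⟨_, fun _ => rfl⟩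
  obtain ⟨d, hd'⟩ : ∃ d : Fin l → ℝ, ∀ j, (B * X * Bᵀ) j j = d j := ⟨_, fun _ => rfl⟩
  simp only [ha'] at ha0 hF
  simp only [hd'] at hd0 hs
  simp only [ha', hd']
  have hF0 : 0 ≤ F := Finset.sum_nonneg fun i _ => Real.sqrt_nonneg _
  clear_value F
  -- Optimality of `X` against its rank-one perturbations `X + ε h hᵀ`.
  have hvar : ∀ (h : Fin n → ℝ) (ε : ℝ), 0 ≤ ε → ∑ i, √(a i + ε * A.mulVec h i ^ 2) ≤
      F * (∑ j, (d j + ε * B.mulVec h j ^ 2) ^ (p / 2)) ^ (1 / p) := by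
    intro h ε hε
    have := hmax (X + ε • vecMulVec h h) (hX.add ((posSemidef_vecMulVec h).smul hε))
    simp only [diag_conj_vecMulVec, ha', hd'] at this
    refine this (lt_of_lt_of_le one_pos ?_)
    rw [← hs]
    refine Finset.sum_le_sum fun j _ => Real.rpow_le_rpow (hd0 j) ?_ (by positivity)
    have : 0 ≤ ε * B.mulVec h j ^ 2 := by positivity
    linarith
  have hder : ∀ h : Fin n → ℝ, HasDerivAt
      (fun ε : ℝ => F * (∑ j, (d j + ε * B.mulVec h j ^ 2) ^ (p / 2)) ^ (1 / p))
      (F / 2 * ∑ j, d j ^ (p / 2 - 1) * B.mulVec h j ^ 2) 0 := by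
    intro h
    have h1 : ∀ j, HasDerivAt (fun ε : ℝ => (d j + ε * B.mulVec h j ^ 2) ^ (p / 2))
        (B.mulVec h j ^ 2 * (p / 2) * d j ^ (p / 2 - 1)) 0 := by
      intro j
      have e : HasDerivAt (fun ε : ℝ => d j + ε * B.mulVec h j ^ 2) (B.mulVec h j ^ 2) 0 := by
        simpa using ((hasDerivAt_id (0 : ℝ)).mul_const (B.mulVec h j ^ 2)).const_add (d j)
      have := e.rpow_const (p := p / 2) (Or.inr (by linarith))
      simpa using this
    have h2 := HasDerivAt.fun_sum (u := Finset.univ) fun j _ => h1 j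
    have h3 := (h2.rpow_const (p := 1 / p) (Or.inl (by simp [hs]))).const_mul F
    refine h3.congr_deriv ?_
    simp only [zero_mul, add_zero, hs, Real.one_rpow, mul_one]
    rw [Finset.sum_mul, Finset.mul_sum, Finset.mul_sum]
    refine Finset.sum_congr rfl fun j _ => ?_
    field_simp
  have hval : ∀ h : Fin n → ℝ,
      F * (∑ j, (d j + 0 * B.mulVec h j ^ 2) ^ (p / 2)) ^ (1 / p) = F := by
    intro h; simp [hs]
  -- If `a i = 0` and the `i`-th row of `A` were nonzero, the objective would grow like `√ε`, faster
  -- than the differentiable upper bound.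
  have hzero : ∀ i, a i = 0 → ∀ h, A.mulVec h i = 0 := by
    intro i hi h
    have hslope := (hasDerivAt_iff_tendsto_slope_zero.1 (hder h)).mono_left
      (nhdsGT_le_nhdsNE 0)
    have hsqrt : Filter.Tendsto (fun t : ℝ => √t) (nhdsWithin 0 (Set.Ioi 0)) (nhds 0) := by
      have := (Real.continuous_sqrt.tendsto 0).mono_left
        (nhdsWithin_le_nhds (s := Set.Ioi (0 : ℝ)))
      simpa using this
    have hprod := hsqrt.mul hslope
    rw [zero_mul] at hprod
    have hle : |A.mulVec h i| ≤ 0 := by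
      refine ge_of_tendsto hprod ?_
      filter_upwards [self_mem_nhdsWithin] with t ht
      have ht : 0 < t := ht
      simp only [zero_add, hval, smul_eq_mul]
      have h1 := hvar h t ht.le
      have h2 : F + √t * |A.mulVec h i| ≤ ∑ i, √(a i + t * A.mulVec h i ^ 2) := by
        rw [hF, ← Finset.add_sum_erase _ _ (Finset.mem_univ i),
          ← Finset.add_sum_erase _ (fun i => √(a i + t * A.mulVec h i ^ 2)) (Finset.mem_univ i)]
        simp only [hi, Real.sqrt_zero, zero_add]
        rw [Real.sqrt_mul ht.le, Real.sqrt_sq_eq_abs, add_comm]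
        gcongr with k
        have : 0 ≤ t * A.mulVec h k ^ 2 := by positivity
        linarith
      have h3 : √t * |A.mulVec h i| ≤
          F * (∑ j, (d j + t * B.mulVec h j ^ 2) ^ (p / 2)) ^ (1 / p) - F := by linarith
      have hst : 0 < √t := Real.sqrt_pos.2 ht
      calc |A.mulVec h i| = √t * (t⁻¹ * (√t * |A.mulVec h i|)) := by
            have : √t * √t = t := Real.mul_self_sqrt ht.le
            field_simp
            rw [sq, this]
        _ ≤ _ := by gcongr
    exact abs_eq_zero.1 (le_antisymm hle (abs_nonneg _))
  -- First-order optimality: the one-sided derivative at `0` of the gap in `hvar` is nonnegative.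
  have hfirst : ∀ h : Fin n → ℝ, ∑ i, A.mulVec h i ^ 2 / √(a i) ≤
      F * ∑ j, d j ^ (p / 2 - 1) * B.mulVec h j ^ 2 := by
    intro h
    have hl : ∀ i, HasDerivAt (fun ε : ℝ => √(a i + ε * A.mulVec h i ^ 2))
        (A.mulVec h i ^ 2 / (2 * √(a i))) 0 := by
      intro i
      by_cases hi : a i = 0
      · simpa [hzero i hi h, hi] using hasDerivAt_const (0 : ℝ) (0 : ℝ)
      · have e : HasDerivAt (fun ε : ℝ => a i + ε * A.mulVec h i ^ 2) (A.mulVec h i ^ 2) 0 := by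
          simpa using ((hasDerivAt_id (0 : ℝ)).mul_const (A.mulVec h i ^ 2)).const_add (a i)
        simpa using e.sqrt (by simpa using hi)
    have h2 := (HasDerivAt.fun_sum (u := Finset.univ) fun i _ => hl i)
    have h3 := (hasDerivAt_iff_tendsto_slope_zero.1 ((hder h).sub h2)).mono_left
      (nhdsGT_le_nhdsNE 0)
    have h4 := ge_of_tendsto h3 (b := 0) (by
      filter_upwards [self_mem_nhdsWithin] with t ht
      have ht : 0 < t := ht
      have h1 := hvar h t ht.le
      simp only [Pi.sub_apply, zero_add, smul_eq_mul, zero_mul, add_zero, hs, Real.one_rpow,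
        mul_one, ← hF, sub_self, sub_zero]
      exact mul_nonneg (by positivity) (by linarith))
    have e : ∑ i, A.mulVec h i ^ 2 / (2 * √(a i)) = (1 / 2) * ∑ i, A.mulVec h i ^ 2 / √(a i) := by
      rw [Finset.mul_sum]
      refine Finset.sum_congr rfl fun i _ => ?_
      rw [mul_comm 2, ← div_div]; ring
    rw [e] at h4
    linarith
  rw [mem_Kset_iff]
  intro y h
  have h1 := hfirst h
  have h2 : ∑ i, 2 * (y i * A.mulVec h i) ≤ ∑ i, (√(a i) * y i ^ 2 + A.mulVec h i ^ 2 / √(a i)) := by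
    refine Finset.sum_le_sum fun i _ => ?_
    by_cases hi : a i = 0
    · simp [hzero i hi h, hi]
    · have hpos : 0 < √(a i) := Real.sqrt_pos.2 (lt_of_le_of_ne (ha0 i) (Ne.symm hi))
      have : √(a i) * y i ^ 2 + A.mulVec h i ^ 2 / √(a i) - 2 * (y i * A.mulVec h i) =
          (√(a i) * y i - A.mulVec h i) ^ 2 / √(a i) := by
        field_simp
        ring
      have : 0 ≤ (√(a i) * y i - A.mulVec h i) ^ 2 / √(a i) := by positivity
      linarith
  rw [Finset.sum_add_distrib, ← Finset.mul_sum] at h2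
  simp only [mul_assoc, ← Finset.mul_sum]
  linarith

/-- A point of `K` whose value is at most twice the objective at a feasible `X = M Mᵀ`. For
`n = 0` no feasible matrix satisfies the constraint with equality, and zero is used throughout. -/
lemma strong_duality {m n l : ℕ} (A : Matrix (Fin m) (Fin n) ℝ)
    {B : Matrix (Fin l) (Fin n) ℝ} (hB : Function.Injective B.mulVec) {p : ℝ} (hp : 2 ≤ p) :
    ∃ (v : Fin m → ℝ) (w : Fin l → ℝ) (M : Matrix (Fin n) (Fin n) ℝ), (v, w) ∈ Kset A B ∧
      ∑ j, ((B * (M * Mᵀ) * Bᵀ) j j) ^ (p / 2) ≤ 1 ∧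
      pNorm 1 v + pNorm (if p = 2 then (∞ : ℝ≥0∞) else ENNReal.ofReal (p / (p - 2))) w ≤
        2 * ∑ i, √((A * (M * Mᵀ) * Aᵀ) i i) := by
  have hp0 : 0 < p := by linarith
  by_cases hn : ∀ h : Fin n → ℝ, h = 0
  · refine ⟨0, 0, 0, ?_, ?_, ?_⟩
    · rw [mem_Kset_iff]
      intro y h
      simp [hn h]
    · simp [Real.zero_rpow (show p / 2 ≠ 0 by positivity)]
    · rw [pNorm_one]
      split_ifs with h2
      · simp [pNorm]
      · have hp2 : 0 < p - 2 := by
          have := lt_of_le_of_ne hp (Ne.symm h2)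
          linarith
        have : p / (p - 2) ≠ 0 := by positivity
        have h3 : (p / (p - 2))⁻¹ ≠ 0 := inv_ne_zero this
        rw [pNorm_ofReal (by positivity)]
        simp only [Pi.zero_apply, abs_zero, Real.zero_rpow this, Finset.sum_const_zero, one_div,
          Real.zero_rpow h3]
        simp
  · push Not at hn
    obtain ⟨h₀, h_ne⟩ := hn
    obtain ⟨X, hX, hs, hK⟩ := strong_duality_aux A hB hp h_ne
    have hd0 : ∀ j, 0 ≤ (B * X * Bᵀ) j j := diag_conj_nonneg hX B
    obtain ⟨M, hM⟩ : ∃ M : Matrix (Fin n) (Fin n) ℝ, X = M * Mᵀ := by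
      open scoped MatrixOrder in
      obtain ⟨C, hC⟩ := CStarAlgebra.nonneg_iff_eq_star_mul_self.mp hX.nonneg
      refine ⟨Cᵀ, ?_⟩
      rw [hC, star_eq_conjTranspose, conjTranspose_eq_transpose_of_trivial, transpose_transpose]
    refine ⟨_, _, M, hK, by rw [← hM, hs], ?_⟩
    rw [← hM]
    set F := ∑ i, √((A * X * Aᵀ) i i) with hF
    have hF0 : 0 ≤ F := Finset.sum_nonneg fun i _ => Real.sqrt_nonneg _
    have hv : pNorm 1 (fun i => √((A * X * Aᵀ) i i)) = F := by
      rw [pNorm_one, hF]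
      simp only [abs_of_nonneg (Real.sqrt_nonneg _)]
    rw [hv, two_mul]
    gcongr
    split_ifs with h2
    · subst h2
      simp only [pNorm, if_true]
      refine Real.iSup_le (fun j => ?_) hF0
      norm_num [abs_of_nonneg hF0]
    · have hp2 : 0 < p - 2 := by
        have := lt_of_le_of_ne hp (Ne.symm h2)
        linarith
      have hq : 0 < p / (p - 2) := by positivity
      rw [pNorm_ofReal hq.le]
      have e : ∀ j, |F * (B * X * Bᵀ) j j ^ (p / 2 - 1)| ^ (p / (p - 2)) =
          F ^ (p / (p - 2)) * (B * X * Bᵀ) j j ^ (p / 2) := by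
        intro j
        rw [abs_of_nonneg (mul_nonneg hF0 (Real.rpow_nonneg (hd0 j) _)),
          Real.mul_rpow hF0 (Real.rpow_nonneg (hd0 j) _), ← Real.rpow_mul (hd0 j)]
        congr 2
        field_simp
      simp only [e]
      rw [← Finset.mul_sum, hs, mul_one, ← Real.rpow_mul hF0, mul_one_div_cancel hq.ne',
        Real.rpow_one]

/-! ### The two inequalities -/

/-- Let `A ∈ ℝ^{m×n}`, `B ∈ ℝ^{l×n}` injective, and `p ∈ [2,∞)`.  Then
`‖A‖_{p↦1;B} ≤ (1/2)·min_{(v,w) ∈ K} (‖v‖_1 + ‖w‖_{p/(p−2)}) ≤ (γ_p/γ_1)·‖A‖_{p↦1;B}`, where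
the exponent `p/(p−2)` is interpreted as `∞` when `p = 2`. -/
theorem stmt17 (m n l : ℕ)
    (A : Matrix (Fin m) (Fin n) ℝ) (B : Matrix (Fin l) (Fin n) ℝ)
    (hB : Function.Injective B.mulVec)
    (p : ℝ) (hp : 2 ≤ p) :
    gnorm A B (ENNReal.ofReal p) 1 ≤
      (1 / 2) * sInf {r : ℝ | ∃ vw ∈ Kset A B,
        r = pNorm 1 vw.1 +
            pNorm (if p = 2 then (∞ : ℝ≥0∞) else ENNReal.ofReal (p / (p - 2))) vw.2} ∧
    (1 / 2) * sInf {r : ℝ | ∃ vw ∈ Kset A B,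
        r = pNorm 1 vw.1 +
            pNorm (if p = 2 then (∞ : ℝ≥0∞) else ENNReal.ofReal (p / (p - 2))) vw.2} ≤
      (gam p / gam 1) * gnorm A B (ENNReal.ofReal p) 1 := by
  have hp0 : 0 < p := by linarith
  obtain ⟨v, w, M, hK, hM, hvw⟩ := strong_duality A hB hp
  set q : ℝ≥0∞ := if p = 2 then (∞ : ℝ≥0∞) else ENNReal.ofReal (p / (p - 2)) with hq
  set S := {r : ℝ | ∃ vw ∈ Kset A B, r = pNorm 1 vw.1 + pNorm q vw.2} with hS
  set T := {r : ℝ | ∃ x : Fin n → ℝ, pNorm (ENNReal.ofReal p) (B.mulVec x) ≤ 1 ∧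
    r = pNorm 1 (A.mulVec x)} with hT
  have hgn : gnorm A B (ENNReal.ofReal p) 1 = sSup T := rfl
  have hTS : ∀ r ∈ T, ∀ s ∈ S, r ≤ (1 / 2) * s := by
    rintro r ⟨x, hx, rfl⟩ s ⟨⟨v', w'⟩, hK', rfl⟩
    exact pNorm_one_le_of_mem_Kset hp hK' x hx
  have hSne : S.Nonempty := ⟨_, (v, w), hK, rfl⟩
  have hT0 : (0 : ℝ) ∈ T := by
    refine ⟨0, ?_, ?_⟩
    · rw [pNorm_ofReal hp0.le]
      simp [Real.zero_rpow hp0.ne', Real.zero_rpow (inv_ne_zero hp0.ne')]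
    · rw [pNorm_one]; simp
  have hSb : ∀ s ∈ S, 0 ≤ s := fun s hs => by linarith [hTS 0 hT0 s hs]
  have hTb : BddAbove T := ⟨_, fun r hr => hTS r hr _ hSne.some_mem⟩
  have hN0 : 0 ≤ sSup T := le_csSup hTb hT0
  rw [hgn]
  constructor
  · refine csSup_le ⟨0, hT0⟩ fun r hr => ?_
    have : 2 * r ≤ sInf S := le_csInf hSne fun s hs => by linarith [hTS r hr s hs]
    linarith
  · have hN : ∀ x, ∑ i, |A.mulVec x i| ≤ sSup T * (∑ j, |B.mulVec x j| ^ p) ^ (1 / p) := by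
      intro x
      set t := (∑ j, |B.mulVec x j| ^ p) ^ (1 / p) with ht
      by_cases hx : x = 0
      · have : 0 ≤ t := by positivity
        simp only [hx, mulVec_zero, Pi.zero_apply, abs_zero, Finset.sum_const_zero]
        positivity
      have hBx : B.mulVec x ≠ 0 := fun h => hx (hB (by rw [h, mulVec_zero]))
      obtain ⟨j, hj⟩ := Function.ne_iff.1 hBx
      have hsum : 0 < ∑ j, |B.mulVec x j| ^ p :=
        Finset.sum_pos' (fun i _ => by positivity)
          ⟨j, Finset.mem_univ _, Real.rpow_pos_of_pos (abs_pos.2 hj) _⟩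
      have htpos : 0 < t := Real.rpow_pos_of_pos hsum _
      have htp : t ^ p = ∑ j, |B.mulVec x j| ^ p := by
        rw [ht, ← Real.rpow_mul hsum.le, one_div_mul_cancel hp0.ne', Real.rpow_one]
      have hmem : pNorm 1 (A.mulVec (t⁻¹ • x)) ∈ T := by
        refine ⟨_, ?_, rfl⟩
        rw [pNorm_ofReal hp0.le]
        simp only [mulVec_smul, Pi.smul_apply, smul_eq_mul, abs_mul,
          abs_of_pos (inv_pos.2 htpos), Real.mul_rpow (inv_pos.2 htpos).le (abs_nonneg _)]
        rw [← Finset.mul_sum, ← htp, ← Real.mul_rpow (inv_pos.2 htpos).le htpos.le,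
          inv_mul_cancel₀ htpos.ne']
        simp
      have := le_csSup hTb hmem
      rw [pNorm_one] at this
      simp only [mulVec_smul, Pi.smul_apply, smul_eq_mul, abs_mul,
          abs_of_pos (inv_pos.2 htpos)] at this
      rw [← Finset.mul_sum, inv_mul_le_iff₀ htpos] at this
      linarith
    have hr := rounding A B hp M hM hN0 hN
    have hg := gam_pos (s := 1) one_pos
    have h1 : sInf S ≤ pNorm 1 v + pNorm q w := csInf_le ⟨0, hSb⟩ ⟨(v, w), hK, rfl⟩
    rw [div_mul_eq_mul_div (gam p), le_div_iff₀ hg]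
    calc (1 / 2) * sInf S * gam 1 ≤ (∑ i, √((A * (M * Mᵀ) * Aᵀ) i i)) * gam 1 := by
          gcongr
          linarith
      _ ≤ _ := by linarith
end
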